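/- arXiv:1703.09904 — 8 statements merged into one kernel-verified Lean document; each statement's English description precedes it below -/
import Mathlib

section
/- Let 1 ≤ n ≤ l and let σ be a permutation of Fin n. Then the set Y_σ = {P : Fin n → Fin l | P(σ(1)) ≤ P(σ(2)) ≤ … ≤ P(σ(n))} is an irreducible algebraic set. -/
/-- The solution set of the equation given by the pair (A, B) of nonempty subsets of `Fin n`:
points `P : Fin n → Fin l` with `min_{i ∈ A} P i = min_{j ∈ B} P j`. -/
def solutionSet {n : ℕ} (l : ℕ) (A B : Finset (Fin n)) (hA : A.Nonempty) (hB : B.Nonempty) :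
    Set (Fin n → Fin l) :=
  {P | A.inf' hA P = B.inf' hB P}

/-- A set of points is algebraic if it is the intersection of the solution sets of some
family of equations (pairs of nonempty subsets of `Fin n`). -/
def IsAlgebraicSet (n l : ℕ) (Y : Set (Fin n → Fin l)) : Prop :=
  ∃ (I : Type) (A B : I → Finset (Fin n)) (hA : ∀ i, (A i).Nonempty)
    (hB : ∀ i, (B i).Nonempty), Y = ⋂ i, solutionSet l (A i) (B i) (hA i) (hB i)

/-- An algebraic set `Y` is irreducible if whenever `Y = Y₁ ∪ … ∪ Yₘ` with each `Yᵢ`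
algebraic, then `Y = Yᵢ` for some `i`. -/
def IsIrreducibleAlg (n l : ℕ) (Y : Set (Fin n → Fin l)) : Prop :=
  ∀ (m : ℕ) (Z : Fin m → Set (Fin n → Fin l)),
    (∀ i, IsAlgebraicSet n l (Z i)) → Y = ⋃ i, Z i → ∃ i, Y = Z i

/-!
A term evaluated at a point `P` depends on `P` naturally along semilattice homomorphisms of the
value chain, and for chains these are just the monotone maps. If `P` lists its coordinates in
strictly increasing order along `σ`, then `P = P ∘ σ ∘ σ⁻¹` is an injective homomorphic image of
`σ⁻¹`, while every point of `Y_σ` is a homomorphic image of `σ⁻¹`; so every equation satisfied by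
`P` holds on all of `Y_σ`. Such a `P` exists because `n ≤ l`, and a set with such a generic point
is irreducible: the piece of a cover containing the point is already the whole set.
-/

section GenericPoint

variable {n l : ℕ} {P : Fin n → Fin l} {Y Z : Set (Fin n → Fin l)}

/-- `P` is a generic point of `Y`: it lies in `Y`, and every equation it satisfies holds on all
of `Y`. It is the analogue of a generic point in algebraic geometry and serves to prove
irreducibility. -/
def IsAlgGenericPoint (P : Fin n → Fin l) (Y : Set (Fin n → Fin l)) : Prop :=
  P ∈ Y ∧ ∀ (A B : Finset (Fin n)) (hA : A.Nonempty) (hB : B.Nonempty),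
    P ∈ solutionSet l A B hA hB → Y ⊆ solutionSet l A B hA hB

theorem IsAlgGenericPoint.subset_of_mem (hP : IsAlgGenericPoint P Y) (hZ : IsAlgebraicSet n l Z)
    (hPZ : P ∈ Z) : Y ⊆ Z := by
  obtain ⟨I, A, B, hA, hB, rfl⟩ := hZ
  exact Set.subset_iInter fun i =>
    hP.2 (A i) (B i) (hA i) (hB i) (Set.mem_iInter.mp hPZ i)

theorem IsAlgGenericPoint.isIrreducibleAlg (hP : IsAlgGenericPoint P Y) :
    IsIrreducibleAlg n l Y := by
  intro m Z hZ hYZ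
  obtain ⟨i, hPi⟩ := Set.mem_iUnion.mp (hYZ ▸ hP.1)
  exact ⟨i, (hP.subset_of_mem (hZ i) hPi).antisymm (hYZ ▸ Set.subset_iUnion Z i)⟩

end GenericPoint

section SolutionSet

variable {n k l : ℕ} {A B : Finset (Fin n)} {hA : A.Nonempty} {hB : B.Nonempty}
  {P : Fin n → Fin k} {g : Fin k → Fin l}

theorem mem_solutionSet_pair_singleton {i j : Fin n} :
    P ∈ solutionSet k {i, j} {i} (Finset.insert_nonempty i {j}) (Finset.singleton_nonempty i) ↔
      P i ≤ P j := by
  simp [solutionSet, Finset.inf'_insert]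

theorem comp_mem_solutionSet_iff (hg : Monotone g) :
    g ∘ P ∈ solutionSet l A B hA hB ↔ g (A.inf' hA P) = g (B.inf' hB P) := by
  rw [Finset.apply_inf'_eq_inf'_comp hA g fun _ _ => hg.map_inf _ _,
    Finset.apply_inf'_eq_inf'_comp hB g fun _ _ => hg.map_inf _ _]
  rfl

theorem comp_mem_solutionSet (hg : Monotone g) (hP : P ∈ solutionSet k A B hA hB) :
    g ∘ P ∈ solutionSet l A B hA hB :=
  (comp_mem_solutionSet_iff hg).mpr (congrArg g hP)

theorem comp_mem_solutionSet_iff_of_strictMono (hg : StrictMono g) :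
    g ∘ P ∈ solutionSet l A B hA hB ↔ P ∈ solutionSet k A B hA hB :=
  (comp_mem_solutionSet_iff hg.monotone).trans hg.injective.eq_iff

end SolutionSet

section MonotoneAlong

variable {n l : ℕ}

theorem isAlgebraicSet_setOf_monotone_comp {ι : Type} [Preorder ι] (f : ι → Fin n) :
    IsAlgebraicSet n l {P | Monotone fun i => P (f i)} := by
  refine ⟨{p : ι × ι // p.1 ≤ p.2}, fun p => {f p.1.1, f p.1.2}, fun p => {f p.1.1},
    fun _ => Finset.insert_nonempty _ _, fun _ => Finset.singleton_nonempty _, ?_⟩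
  ext P
  simp only [Set.mem_iInter, mem_solutionSet_pair_singleton, Subtype.forall, Prod.forall]
  rfl

theorem isAlgGenericPoint_of_strictMono_comp {P : Fin n → Fin l} {σ : Equiv.Perm (Fin n)}
    (hP : StrictMono fun i => P (σ i)) :
    IsAlgGenericPoint P {Q : Fin n → Fin l | Monotone fun i => Q (σ i)} := by
  have eq_comp_symm (Q : Fin n → Fin l) : Q = (fun i => Q (σ i)) ∘ σ.symm := by
    ext; simp
  refine ⟨hP.monotone, fun A B hA hB hPAB Q hQ => ?_⟩
  rw [eq_comp_symm P, comp_mem_solutionSet_iff_of_strictMono hP] at hPAB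
  rw [eq_comp_symm Q]
  exact comp_mem_solutionSet hQ hPAB

theorem exists_strictMono_comp_perm (hnl : n ≤ l) (σ : Equiv.Perm (Fin n)) :
    ∃ P : Fin n → Fin l, StrictMono fun i => P (σ i) :=
  ⟨Fin.castLE hnl ∘ σ.symm, by simpa using Fin.strictMono_castLE hnl⟩

end MonotoneAlong

/-- Let 1 ≤ n ≤ l and let σ be a permutation of `Fin n`. Then the set
`Y_σ = {P : Fin n → Fin l | P(σ(1)) ≤ P(σ(2)) ≤ … ≤ P(σ(n))}` is an irreducible
algebraic set. -/
theorem stmt_4 (n l : ℕ) (hn : 1 ≤ n) (hnl : n ≤ l) (σ : Equiv.Perm (Fin n)) :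
    IsAlgebraicSet n l {P : Fin n → Fin l | Monotone fun i => P (σ i)} ∧
    IsIrreducibleAlg n l {P : Fin n → Fin l | Monotone fun i => P (σ i)} := by
  obtain ⟨P, hP⟩ := exists_strictMono_comp_perm hnl σ
  exact ⟨isAlgebraicSet_setOf_monotone_comp σ,
    (isAlgGenericPoint_of_strictMono_comp hP).isIrreducibleAlg⟩
end

section
/- Let n, l ≥ 1 and let (A, B) be a pair of nonempty subsets of Fin n with A ∪ B = Fin n. Then the solution set V(A,B) = {P : Fin n → Fin l | min_{i∈A} P(i) = min_{j∈B} P(j)} equals the union, over all permutations σ of Fin n of the first kind, of the sets {P | P(σ(1)) ≤ P(σ(2)) ≤ … ≤ P(σ(n))}, together with the union, over all permutations σ of the second kind, of the sets {P | P(σ(1)) = P(σ(2)) ≤ P(σ(3)) ≤ … ≤ P(σ(n))}. -/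
/-!
Since `A ∪ B` contains every variable, the two minima agree exactly when both `A` and `B` contain a
minimizer of `P`, that is, when a minimizer lies in `A ∩ B` or there are minimizers in both `B \ A`
and `A \ B`. Minimizers can be moved to the front of a sorted arrangement of `P`, because exchanging
positions at which `P` takes the same value does not change the sequence of values.
-/

theorem inf'_eq_apply_of_forall_le {ι α : Type*} [SemilatticeInf α] {P : ι → α} {S : Finset ι}
    (hS : S.Nonempty) {a : ι} (ha : a ∈ S) (hmin : ∀ i ∈ S, P a ≤ P i) : S.inf' hS P = P a :=
  le_antisymm (Finset.inf'_le P ha) (Finset.le_inf' hS P hmin)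

theorem inf'_eq_inf'_iff_exists_forall_le {ι α : Type*} [LinearOrder α] {P : ι → α}
    {A B : Finset ι} (hA : A.Nonempty) (hB : B.Nonempty) (hAB : ∀ i, i ∈ A ∨ i ∈ B) :
    A.inf' hA P = B.inf' hB P ↔
      (∃ a ∈ A, ∀ i, P a ≤ P i) ∧ ∃ b ∈ B, ∀ i, P b ≤ P i := by
  constructor
  · intro h
    have inf'_le_apply (i : ι) : A.inf' hA P ≤ P i := by
      rcases hAB i with hi | hi
      · exact Finset.inf'_le P hi
      · exact h ▸ Finset.inf'_le P hi
    obtain ⟨a, ha, hPa⟩ := A.exists_mem_eq_inf' hA P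
    obtain ⟨b, hb, hPb⟩ := B.exists_mem_eq_inf' hB P
    exact ⟨⟨a, ha, hPa ▸ inf'_le_apply⟩, b, hb, hPb ▸ h ▸ inf'_le_apply⟩
  · rintro ⟨⟨a, ha, ha_min⟩, b, hb, hb_min⟩
    rw [inf'_eq_apply_of_forall_le hA ha fun i _ => ha_min i,
      inf'_eq_apply_of_forall_le hB hb fun i _ => hb_min i]
    exact le_antisymm (ha_min b) (hb_min a)

theorem exists_mem_and_exists_mem_iff_inter_or_sdiff {ι : Type*} [DecidableEq ι] {A B : Finset ι}
    {p : ι → Prop} :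
    ((∃ a ∈ A, p a) ∧ ∃ b ∈ B, p b) ↔
      (∃ c ∈ A ∩ B, p c) ∨ ∃ b ∈ B \ A, ∃ a ∈ A \ B, p b ∧ p a := by
  simp only [Finset.mem_inter, Finset.mem_sdiff]
  grind

theorem comp_setValue_eq_comp {κ ι α : Type*} [DecidableEq κ] {P : ι → α} {σ : κ ≃ ι} {k : κ}
    {c : ι} (h : P (σ k) = P c) : P ∘ σ.setValue k c = P ∘ σ :=
  funext fun _ => Equiv.apply_swap_eq_self (v := P ∘ σ) (by simpa using h) _

section Sorting

variable {n : ℕ} [NeZero n] {α : Type*} [LinearOrder α] {P : Fin n → α}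

theorem exists_perm_zero_eq_and_monotone_iff {b : Fin n} :
    (∃ σ : Equiv.Perm (Fin n), σ 0 = b ∧ Monotone (P ∘ σ)) ↔ ∀ i, P b ≤ P i := by
  constructor
  · rintro ⟨σ, rfl, hσ⟩ i
    simpa using hσ (Fin.zero_le (σ.symm i))
  · intro hb
    let σ := Tuple.sort P
    have hσ : Monotone (P ∘ σ) := Tuple.monotone_sort P
    have hP : P (σ 0) = P b :=
      le_antisymm (by simpa using hσ (Fin.zero_le (σ.symm b))) (hb (σ 0))
    exact ⟨σ.setValue 0 b, σ.setValue_eq 0 b, (comp_setValue_eq_comp hP).symm ▸ hσ⟩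

theorem exists_perm_zero_eq_one_eq_and_monotone_iff {a b : Fin n} (hba : b ≠ a) :
    (∃ σ : Equiv.Perm (Fin n), σ 0 = b ∧ σ 1 = a ∧ P b = P a ∧ Monotone (P ∘ σ)) ↔
      (∀ i, P b ≤ P i) ∧ ∀ i, P a ≤ P i := by
  constructor
  · rintro ⟨σ, h0, -, hP, hσ⟩
    have hb := exists_perm_zero_eq_and_monotone_iff.1 ⟨σ, h0, hσ⟩
    exact ⟨hb, hP ▸ hb⟩
  · rintro ⟨hb, ha⟩
    obtain ⟨σ, rfl, hσ⟩ := exists_perm_zero_eq_and_monotone_iff.2 hb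
    have symm_ne_zero : σ.symm a ≠ 0 := fun h => hba (by simp [← h])
    have one_le_symm : 1 ≤ σ.symm a := Fin.one_le_of_ne_zero symm_ne_zero
    -- In `Fin 1` the numeral `1` denotes `0`; the two distinct elements rule this case out.
    have one_ne_zero : (1 : Fin n) ≠ 0 := by
      rw [Ne, Fin.one_eq_zero_iff]
      rintro rfl
      exact hba (Subsingleton.elim _ _)
    have hP : P (σ 1) = P a := le_antisymm (by simpa using hσ one_le_symm) (ha (σ 1))
    refine ⟨σ.setValue 1 a, ?_, σ.setValue_eq 1 a, le_antisymm (hb a) (ha (σ 0)),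
      (comp_setValue_eq_comp hP).symm ▸ hσ⟩
    simp [Equiv.setValue, Equiv.swap_apply_of_ne_of_ne one_ne_zero.symm symm_ne_zero.symm]

theorem exists_perm_zero_mem_and_monotone_iff {S : Finset (Fin n)} :
    (∃ σ : Equiv.Perm (Fin n), σ 0 ∈ S ∧ Monotone (P ∘ σ)) ↔ ∃ b ∈ S, ∀ i, P b ≤ P i := by
  simp only [← exists_perm_zero_eq_and_monotone_iff]
  constructor
  · rintro ⟨σ, hS, hσ⟩
    exact ⟨σ 0, hS, σ, rfl, hσ⟩
  · rintro ⟨_, hS, σ, rfl, hσ⟩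
    exact ⟨σ, hS, hσ⟩

theorem exists_perm_zero_mem_one_mem_and_monotone_iff {S T : Finset (Fin n)}
    (hST : Disjoint S T) :
    (∃ σ : Equiv.Perm (Fin n), (σ 0 ∈ S ∧ σ 1 ∈ T) ∧ P (σ 0) = P (σ 1) ∧ Monotone (P ∘ σ)) ↔
      ∃ b ∈ S, ∃ a ∈ T, (∀ i, P b ≤ P i) ∧ ∀ i, P a ≤ P i := by
  constructor
  · rintro ⟨σ, ⟨hb, ha⟩, hσ⟩
    have hba : σ 0 ≠ σ 1 := Finset.disjoint_iff_ne.1 hST _ hb _ ha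
    exact ⟨σ 0, hb, σ 1, ha,
      (exists_perm_zero_eq_one_eq_and_monotone_iff hba).1 ⟨σ, rfl, rfl, hσ⟩⟩
  · rintro ⟨b, hb, a, ha, hmin⟩
    have hba : b ≠ a := Finset.disjoint_iff_ne.1 hST _ hb _ ha
    obtain ⟨σ, rfl, rfl, hσ⟩ := (exists_perm_zero_eq_one_eq_and_monotone_iff hba).2 hmin
    exact ⟨σ, ⟨hb, ha⟩, hσ⟩

end Sorting

theorem stmt_6_general {n : ℕ} [NeZero n] {α : Type*} [LinearOrder α] (A B : Finset (Fin n))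
    (hA : A.Nonempty) (hB : B.Nonempty) (hAB : A ∪ B = Finset.univ) :
    {P : Fin n → α | A.inf' hA P = B.inf' hB P} =
      (⋃ σ : Equiv.Perm (Fin n), ⋃ (_ : σ 0 ∈ A ∩ B),
        {P : Fin n → α | Monotone fun i => P (σ i)}) ∪
      (⋃ σ : Equiv.Perm (Fin n), ⋃ (_ : σ 0 ∈ B \ A ∧ σ 1 ∈ A \ B),
        {P : Fin n → α | P (σ 0) = P (σ 1) ∧ Monotone fun i => P (σ i)}) := by
  ext P
  have mem_or_mem (i : Fin n) : i ∈ A ∨ i ∈ B :=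
    Finset.mem_union.1 (hAB ▸ Finset.mem_univ i)
  simp only [Set.mem_ofPred_eq, Set.mem_union, Set.mem_iUnion, exists_prop]
  rw [inf'_eq_inf'_iff_exists_forall_le hA hB mem_or_mem,
    exists_mem_and_exists_mem_iff_inter_or_sdiff, ← exists_perm_zero_mem_and_monotone_iff,
    ← exists_perm_zero_mem_one_mem_and_monotone_iff disjoint_sdiff_sdiff]
  rfl

/-- Let n, l ≥ 1 and let (A, B) be a pair of nonempty subsets of `Fin n` with
`A ∪ B = Fin n`. Then the solution set
`V(A,B) = {P : Fin n → Fin l | min_{i∈A} P i = min_{j∈B} P j}` equals the union, over all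
permutations σ of `Fin n` of the first kind (`σ(1) ∈ A ∩ B`), of the sets
`{P | P(σ(1)) ≤ … ≤ P(σ(n))}`, together with the union, over all permutations σ of the
second kind (`σ(1) ∈ B \ A`, `σ(2) ∈ A \ B`), of the sets
`{P | P(σ(1)) = P(σ(2)) ≤ P(σ(3)) ≤ … ≤ P(σ(n))}`.
(Positions 1 and 2 are the indices `0, 1 : Fin n`.) -/
theorem stmt_6 (n l : ℕ) [NeZero n] (hn : 1 ≤ n) (hl : 1 ≤ l) (A B : Finset (Fin n))
    (hA : A.Nonempty) (hB : B.Nonempty) (hAB : A ∪ B = Finset.univ) :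
    {P : Fin n → Fin l | A.inf' hA P = B.inf' hB P} =
      (⋃ σ : Equiv.Perm (Fin n), ⋃ (_ : σ 0 ∈ A ∩ B),
        {P : Fin n → Fin l | Monotone fun i => P (σ i)}) ∪
      (⋃ σ : Equiv.Perm (Fin n), ⋃ (_ : σ 0 ∈ B \ A ∧ σ 1 ∈ A \ B),
        {P : Fin n → Fin l | P (σ 0) = P (σ 1) ∧ Monotone fun i => P (σ i)}) :=
  stmt_6_general A B hA hB hAB
end

section
/- Let 1 ≤ n ≤ l, let (A, B) be a pair of nonempty subsets of Fin n with A ∪ B = Fin n, and let σ, σ′ be two distinct permutations of Fin n, each of the first or second kind with respect to (A, B). Then Y_σ is not a subset of Y_{σ′}. -/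
/-- The set `Y_σ` for a permutation σ of the first kind:
`{P | P(σ(1)) ≤ P(σ(2)) ≤ … ≤ P(σ(n))}`. -/
def chainSet (n l : ℕ) (σ : Equiv.Perm (Fin n)) : Set (Fin n → Fin l) :=
  {P | Monotone fun i => P (σ i)}

/-- The set `Y_σ` for a permutation σ of the second kind:
`{P | P(σ(1)) = P(σ(2)) ≤ P(σ(3)) ≤ … ≤ P(σ(n))}`. -/
def eqChainSet (n l : ℕ) [NeZero n] (σ : Equiv.Perm (Fin n)) : Set (Fin n → Fin l) :=
  {P | P (σ 0) = P (σ 1) ∧ Monotone fun i => P (σ i)}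

/-- The set `Y_σ` attached to a permutation σ (of the first or second kind) with respect to
the equation (A, B): the chain set if σ is of the first kind (`σ(1) ∈ A ∩ B`), and the
equality-chain set otherwise. -/
def permSet (n l : ℕ) [NeZero n] (A B : Finset (Fin n)) (σ : Equiv.Perm (Fin n)) :
    Set (Fin n → Fin l) :=
  if σ 0 ∈ A ∩ B then chainSet n l σ else eqChainSet n l σ

/-!
A point of `L_l` that takes only two values `a < b` lies in `chainSet n l σ` exactly when its
`a`-part is an initial segment of the list `σ(1), …, σ(n)`. An inclusion of the sets attached to
`σ` and `σ'` therefore forces the two lists to have the same initial segments: all of them when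
`σ` is of the first kind, those of length at least two when `σ` is of the second kind. In the
first case `σ = σ'`. In the second case `σ` and `σ'` can differ only by exchanging the first two
entries, and then `σ'(1) = σ(2)` would be in `A \ B`, which neither kind allows.
-/

open Equiv

theorem two_le_of_perm_ne {n : ℕ} {σ σ' : Perm (Fin n)} (hne : σ ≠ σ') : 2 ≤ n := by
  by_contra! hn
  have : Subsingleton (Fin n) := Fin.subsingleton_iff_le_one.2 (Nat.le_of_lt_succ hn)
  exact hne (Subsingleton.elim _ _)

theorem eq_one_of_forall_ne {α : Type*} {τ : Perm α} {b : α} (hτ : ∀ x ≠ b, τ x = x) :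
    τ = 1 := by
  ext x
  by_contra hx
  have hxb : x = b := not_imp_comm.1 (hτ x) hx
  exact hx (τ.injective (hτ (τ x) (hxb ▸ hx)))

theorem eq_one_or_eq_swap_of_forall_ne {α : Type*} [DecidableEq α] {τ : Perm α} {a b : α}
    (hτ : ∀ x, x ≠ a → x ≠ b → τ x = x) : τ = 1 ∨ τ = swap a b := by
  by_cases ha : τ a = a
  · left
    exact eq_one_of_forall_ne (b := b) (by grind)
  · right
    have hab : τ a = b := by
      by_contra hb
      exact ha (τ.injective (hτ (τ a) ha hb))
    have hone : swap a b * τ = 1 := by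
      refine eq_one_of_forall_ne (b := b) fun x hxb => ?_
      rw [Perm.mul_apply]
      rcases eq_or_ne x a with rfl | hxa
      · rw [hab, swap_apply_right]
      · rw [hτ x hxa hxb, swap_apply_of_ne_of_ne hxa hxb]
    exact (mul_eq_one_iff_inv_eq.1 hone).symm

theorem fin_one_lt_of_ne_zero_of_ne_one {n : ℕ} [NeZero n] {i : Fin n} (h0 : i ≠ 0) (h1 : i ≠ 1) :
    1 < i := by
  rcases n with _ | _ | n
  · exact i.elim0
  · exact absurd (Fin.fin_one_eq_zero i) h0
  · rw [Ne, Fin.ext_iff, Fin.val_zero] at h0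
    rw [Ne, Fin.ext_iff, Fin.val_one] at h1
    rw [Fin.lt_def, Fin.val_one]
    omega

section StepPoint

variable {n : ℕ} {β : Type*}

/-- The two-valued point which is `a` at those variables that come before position `k` in the
list `σ(1), …, σ(n)`, and `b` at the others (positions `k` count from `0`). It is the test point
for the initial segment of length `k`. -/
def stepPoint (a b : β) (σ : Perm (Fin n)) (k : Fin n) : Fin n → β :=
  fun x => if σ.symm x < k then a else b

theorem stepPoint_apply_perm (a b : β) (σ : Perm (Fin n)) (k i : Fin n) :
    stepPoint a b σ k (σ i) = if i < k then a else b := by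
  rw [stepPoint, symm_apply_apply]

theorem monotone_stepPoint_comp [Preorder β] {a b : β} (hab : a ≤ b) (σ : Perm (Fin n))
    (k : Fin n) : Monotone (stepPoint a b σ k ∘ σ) := by
  intro i j hij
  simp only [Function.comp_apply, stepPoint_apply_perm]
  split_ifs with hi hj hj
  · exact le_rfl
  · exact hab
  · exact absurd (hij.trans_lt hj) hi
  · exact le_rfl

theorem lt_iff_of_monotone_stepPoint_comp [PartialOrder β] {a b : β} (hab : a < b)
    {σ σ' : Perm (Fin n)} {k : Fin n} (h : Monotone (stepPoint a b σ k ∘ σ')) (i : Fin n) :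
    σ.symm (σ' i) < k ↔ i < k := by
  have hcomp : stepPoint a b σ k ∘ σ' = stepPoint a b σ k ∘ σ :=
    Tuple.unique_monotone h (monotone_stepPoint_comp hab.le σ k)
  have hi : (if σ.symm (σ' i) < k then a else b) = if i < k then a else b :=
    (congrFun hcomp i).trans (stepPoint_apply_perm a b σ k i)
  have := hab.ne
  grind

end StepPoint

section Inclusions

variable {n l : ℕ} {σ σ' : Perm (Fin n)}

theorem eq_of_chainSet_subset_chainSet (hl : 2 ≤ l)
    (hsub : chainSet n l σ ⊆ chainSet n l σ') : σ = σ' := by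
  have : Nontrivial (Fin l) := Fin.nontrivial_iff_two_le.2 hl
  obtain ⟨a, b, hab⟩ := exists_pair_lt (Fin l)
  ext1 i
  have hpos : σ.symm (σ' i) = i := eq_of_forall_gt_iff fun k =>
    lt_iff_of_monotone_stepPoint_comp hab (hsub (monotone_stepPoint_comp hab.le σ k)) i
  exact ((symm_apply_eq σ).1 hpos).symm

variable [NeZero n]

theorem stepPoint_mem_eqChainSet {a b : Fin l} (hab : a ≤ b) (σ : Perm (Fin n)) {k : Fin n}
    (hk : 1 < k) : stepPoint a b σ k ∈ eqChainSet n l σ := by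
  refine ⟨?_, monotone_stepPoint_comp hab σ k⟩
  rw [stepPoint_apply_perm, stepPoint_apply_perm, if_pos ((Fin.zero_le 1).trans_lt hk), if_pos hk]

theorem eq_or_eq_mul_swap_of_eqChainSet_subset_chainSet (hl : 2 ≤ l)
    (hsub : eqChainSet n l σ ⊆ chainSet n l σ') : σ' = σ ∨ σ' = σ * swap 0 1 := by
  have : Nontrivial (Fin l) := Fin.nontrivial_iff_two_le.2 hl
  obtain ⟨a, b, hab⟩ := exists_pair_lt (Fin l)
  have hpos (i k : Fin n) (hk : 1 < k) : σ.symm (σ' i) < k ↔ i < k :=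
    lt_iff_of_monotone_stepPoint_comp hab (hsub (stepPoint_mem_eqChainSet hab.le σ hk)) i
  have hfix (i : Fin n) (hi0 : i ≠ 0) (hi1 : i ≠ 1) : (σ⁻¹ * σ') i = i := by
    have hi : 1 < i := fin_one_lt_of_ne_zero_of_ne_one hi0 hi1
    have hle : i ≤ σ.symm (σ' i) := not_lt.1 fun h => lt_irrefl i ((hpos i i hi).1 h)
    exact hle.antisymm' <| not_lt.1 fun h => lt_irrefl _ ((hpos i _ (hi.trans h)).2 h)
  simpa only [inv_mul_eq_iff_eq_mul, mul_one] using eq_one_or_eq_swap_of_forall_ne hfix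

theorem permSet_subset_chainSet (A B : Finset (Fin n)) (σ : Perm (Fin n)) :
    permSet n l A B σ ⊆ chainSet n l σ := by
  unfold permSet
  split_ifs
  · exact subset_rfl
  · exact fun P hP => hP.2

end Inclusions

theorem stmt_7_general {n l : ℕ} [NeZero n] (hl : 2 ≤ l) {A B : Finset (Fin n)}
    {σ σ' : Perm (Fin n)} (hne : σ ≠ σ')
    (hσ : σ 0 ∈ A ∩ B ∨ (σ 0 ∈ B \ A ∧ σ 1 ∈ A \ B))
    (hσ' : σ' 0 ∈ A ∩ B ∨ (σ' 0 ∈ B \ A ∧ σ' 1 ∈ A \ B)) :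
    ¬ permSet n l A B σ ⊆ permSet n l A B σ' := by
  intro hsub
  have hchain := hsub.trans (permSet_subset_chainSet A B σ')
  rcases hσ with hfirst | ⟨h0, h1⟩
  · rw [permSet, if_pos hfirst] at hchain
    exact hne (eq_of_chainSet_subset_chainSet hl hchain)
  · have hnotfirst : σ 0 ∉ A ∩ B := fun h => (Finset.mem_sdiff.1 h0).2 (Finset.mem_inter.1 h).1
    rw [permSet, if_neg hnotfirst] at hchain
    have hswap : σ' = σ * swap 0 1 :=
      (eq_or_eq_mul_swap_of_eqChainSet_subset_chainSet hl hchain).resolve_left hne.symm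
    have hmemB : σ' 0 ∈ B := by grind
    rw [hswap, Perm.mul_apply, swap_apply_left] at hmemB
    exact (Finset.mem_sdiff.1 h1).2 hmemB

/-- Let 1 ≤ n ≤ l, let (A, B) be a pair of nonempty subsets of `Fin n` with
`A ∪ B = Fin n`, and let σ, σ′ be two distinct permutations of `Fin n`, each of the first or
second kind with respect to (A, B). Then `Y_σ` is not a subset of `Y_σ′`. -/
theorem stmt_7 (n l : ℕ) [NeZero n] (hn : 1 ≤ n) (hnl : n ≤ l) (A B : Finset (Fin n))
    (hA : A.Nonempty) (hB : B.Nonempty) (hAB : A ∪ B = Finset.univ)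
    (σ σ' : Equiv.Perm (Fin n)) (hne : σ ≠ σ')
    (hσ : σ 0 ∈ A ∩ B ∨ (σ 0 ∈ B \ A ∧ σ 1 ∈ A \ B))
    (hσ' : σ' 0 ∈ A ∩ B ∨ (σ' 0 ∈ B \ A ∧ σ' 1 ∈ A \ B)) :
    ¬ permSet n l A B σ ⊆ permSet n l A B σ' := by
  exact stmt_7_general ((two_le_of_perm_ne hne).trans hnl) hne hσ hσ'
end

section
/- Let 2 ≤ n ≤ l and let (A, B) be a pair of nonempty subsets of Fin n with A ∪ B = Fin n, |A \ B| = k1 and |B \ A| = k2. Then there exist irreducible algebraic sets Y_1, …, Y_m with Y_i ⊄ Y_j for all i ≠ j such that V(A,B) = Y_1 ∪ … ∪ Y_m and m = (n − k1 − k2) · (n − 1)! + k1 · k2 · (n − 2)!; moreover, any collection of irreducible algebraic sets which are pairwise not contained in one another and whose union is V(A,B) has exactly m members. -/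
/-!
Satisfying every weak inequality that holds between the coordinates of a point `P` is a system of
equations, and every equation solved by `P` follows from them. So these inequalities cut out the
smallest algebraic set through `P`, and this set is irreducible because a finite union covering it
has a member containing `P`.

A solution of `(A, B)` attains its minimum at a coordinate in `A` and at one in `B`. Since `n ≤ l`,
all its other ties can be broken within `Fin l`, which gives a solution whose closure contains it
and whose coordinates are distinct, except that the minimum is attained either once, in `A ∩ B`, or
twice, in `A \ B` and in `B \ A`. The closure of such a generic solution depends only on the order
of its coordinates, and its points have the same order up to further ties. Hence a generic solution
in the closure of another has the same order, because a tie between `A \ B` and `B \ A` does not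
arise from a single minimum in `A ∩ B`. The two kinds of orders number `|A ∩ B| (n - 1)!` and
`|A \ B| |B \ A| (n - 2)!`.

The number of components is well defined because each component of one decomposition lies in a
component of the other.
-/

section PointClosure

variable {ι α : Type*} [Preorder α]

/-- The closure of a point: all points whose coordinates satisfy every weak inequality that holds
between coordinates of `P`. For points of `Fin n → Fin l` this is the smallest algebraic set
containing `P`, and `P` is its generic point. -/
def pointClosure (P : ι → α) : Set (ι → α) :=
  {Q | ∀ i j, P i ≤ P j → Q i ≤ Q j}

theorem mem_pointClosure_self (P : ι → α) : P ∈ pointClosure P := fun _ _ h => h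

theorem pointClosure_subset_iff {P Q : ι → α} : pointClosure P ⊆ pointClosure Q ↔
    P ∈ pointClosure Q :=
  ⟨fun h => h (mem_pointClosure_self P), fun h _ hR i j hij => hR i j (h i j hij)⟩

end PointClosure

section AlgebraicSets

variable {n l : ℕ}

theorem mem_solutionSet_iff {A B : Finset (Fin n)} {hA : A.Nonempty} {hB : B.Nonempty}
    {P : Fin n → Fin l} : P ∈ solutionSet l A B hA hB ↔
      ∃ a ∈ A, ∃ b ∈ B, P a = P b ∧ ∀ i ∈ A ∪ B, P a ≤ P i := by
  change A.inf' hA P = B.inf' hB P ↔ _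
  constructor
  · intro h
    obtain ⟨a, ha, hPa⟩ := Finset.exists_mem_eq_inf' hA P
    obtain ⟨b, hb, hPb⟩ := Finset.exists_mem_eq_inf' hB P
    refine ⟨a, ha, b, hb, hPa.symm.trans (h.trans hPb), fun i hi => ?_⟩
    rcases Finset.mem_union.1 hi with hiA | hiB
    · exact hPa ▸ Finset.inf'_le P hiA
    · exact hPa ▸ h ▸ Finset.inf'_le P hiB
  · rintro ⟨a, ha, b, hb, hab, hmin⟩
    have hPa : A.inf' hA P = P a := le_antisymm (Finset.inf'_le P ha)
      (Finset.le_inf' hA P fun i hi => hmin i (Finset.mem_union_left B hi))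
    have hPb : B.inf' hB P = P b := le_antisymm (Finset.inf'_le P hb)
      (Finset.le_inf' hB P fun i hi => hab ▸ hmin i (Finset.mem_union_right A hi))
    rw [hPa, hPb, hab]

theorem pointClosure_subset_solutionSet {A B : Finset (Fin n)} {hA : A.Nonempty}
    {hB : B.Nonempty} {P : Fin n → Fin l} (hP : P ∈ solutionSet l A B hA hB) :
    pointClosure P ⊆ solutionSet l A B hA hB := by
  intro Q hQ
  rw [mem_solutionSet_iff] at hP ⊢
  obtain ⟨a, ha, b, hb, hab, hmin⟩ := hP
  exact ⟨a, ha, b, hb, le_antisymm (hQ a b hab.le) (hQ b a hab.ge),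
    fun i hi => hQ a i (hmin i hi)⟩

theorem IsAlgebraicSet.pointClosure_subset {Y : Set (Fin n → Fin l)} (hY : IsAlgebraicSet n l Y)
    {P : Fin n → Fin l} (hP : P ∈ Y) : pointClosure P ⊆ Y := by
  obtain ⟨I, A, B, hA, hB, rfl⟩ := hY
  exact Set.subset_iInter fun i => pointClosure_subset_solutionSet (Set.mem_iInter.1 hP i)

theorem IsAlgebraicSet.inter {Y Z : Set (Fin n → Fin l)} (hY : IsAlgebraicSet n l Y)
    (hZ : IsAlgebraicSet n l Z) : IsAlgebraicSet n l (Y ∩ Z) := by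
  obtain ⟨I, A, B, hA, hB, rfl⟩ := hY
  obtain ⟨J, C, D, hC, hD, rfl⟩ := hZ
  refine ⟨I ⊕ J, Sum.elim A C, Sum.elim B D, Sum.rec hA hC, Sum.rec hB hD, ?_⟩
  rw [Set.iInter_sum]
  rfl

-- The inequality `Q i ≤ Q j` is the equation `{i} = {i, j}`.
theorem isAlgebraicSet_pointClosure (P : Fin n → Fin l) :
    IsAlgebraicSet n l (pointClosure P) := by
  refine ⟨{p : Fin n × Fin n // P p.1 ≤ P p.2}, fun p => {p.1.1}, fun p => {p.1.1, p.1.2},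
    fun p => Finset.singleton_nonempty _, fun p => Finset.insert_nonempty _ _, ?_⟩
  ext Q
  simp [solutionSet, pointClosure]

theorem isIrreducibleAlg_pointClosure (P : Fin n → Fin l) :
    IsIrreducibleAlg n l (pointClosure P) := by
  intro m Z hZ hPZ
  obtain ⟨i, hi⟩ := Set.mem_iUnion.1 (hPZ ▸ mem_pointClosure_self P)
  exact ⟨i, ((hZ i).pointClosure_subset hi).antisymm (hPZ ▸ Set.subset_iUnion Z i)⟩

theorem IsIrreducibleAlg.exists_subset_of_subset_iUnion {κ : Type*} [Finite κ]
    {Y : Set (Fin n → Fin l)} (hYirr : IsIrreducibleAlg n l Y) (hY : IsAlgebraicSet n l Y)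
    {Z : κ → Set (Fin n → Fin l)} (hZ : ∀ i, IsAlgebraicSet n l (Z i)) (h : Y ⊆ ⋃ i, Z i) :
    ∃ i, Y ⊆ Z i := by
  obtain ⟨k, ⟨e⟩⟩ := Finite.exists_equiv_fin κ
  have hcover : Y = ⋃ i, Y ∩ Z (e.symm i) := by
    rw [← Set.inter_iUnion, e.symm.surjective.iUnion_comp Z, Set.inter_eq_left.2 h]
  obtain ⟨i, hi⟩ := hYirr k _ (fun i => hY.inter (hZ (e.symm i))) hcover
  exact ⟨e.symm i, Set.inter_eq_left.1 hi.symm⟩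

end AlgebraicSets

section IrreducibleDecomposition

theorem nonempty_equiv_of_mutual_refinement {ι κ α : Type*} [Preorder α] {Y : ι → α} {Z : κ → α}
    (hY : ∀ i j, i ≠ j → ¬ Y i ≤ Y j) (hZ : ∀ i j, i ≠ j → ¬ Z i ≤ Z j)
    (hYZ : ∀ i, ∃ j, Y i ≤ Z j) (hZY : ∀ j, ∃ i, Z j ≤ Y i) : Nonempty (ι ≃ κ) := by
  choose f hf using hYZ
  choose g hg using hZY
  refine ⟨⟨f, g, fun i => ?_, fun j => ?_⟩⟩
  · by_contra hne
    exact hY i (g (f i)) (Ne.symm hne) ((hf i).trans (hg (f i)))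
  · by_contra hne
    exact hZ j (f (g j)) (Ne.symm hne) ((hg j).trans (hf (g j)))

/-- `Y` is an irredundant decomposition of `V` into irreducible algebraic sets, indexed without
repetition; its members are the irreducible components of `V`. -/
structure IsIrreducibleDecomposition {n l : ℕ} {ι : Type*} (V : Set (Fin n → Fin l))
    (Y : ι → Set (Fin n → Fin l)) : Prop where
  irreducible : ∀ i, IsAlgebraicSet n l (Y i) ∧ IsIrreducibleAlg n l (Y i)
  irredundant : ∀ i j, i ≠ j → ¬ Y i ⊆ Y j
  iUnion_eq : ⋃ i, Y i = V

namespace IsIrreducibleDecomposition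

variable {n l : ℕ} {ι κ : Type*} {V : Set (Fin n → Fin l)} {Y : ι → Set (Fin n → Fin l)}
  {Z : κ → Set (Fin n → Fin l)}

theorem comp_equiv (hY : IsIrreducibleDecomposition V Y) (e : κ ≃ ι) :
    IsIrreducibleDecomposition V (Y ∘ e) where
  irreducible i := hY.irreducible (e i)
  irredundant i j hij := hY.irredundant (e i) (e j) (e.injective.ne hij)
  iUnion_eq := (e.surjective.iUnion_comp Y).trans hY.iUnion_eq

theorem exists_subset [Finite κ] (hY : IsIrreducibleDecomposition V Y)
    (hZ : IsIrreducibleDecomposition V Z) (i : ι) : ∃ j, Y i ⊆ Z j := by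
  refine (hY.irreducible i).2.exists_subset_of_subset_iUnion (hY.irreducible i).1
    (fun j => (hZ.irreducible j).1) ?_
  rw [hZ.iUnion_eq, ← hY.iUnion_eq]
  exact Set.subset_iUnion Y i

theorem nonempty_equiv [Finite ι] [Finite κ] (hY : IsIrreducibleDecomposition V Y)
    (hZ : IsIrreducibleDecomposition V Z) : Nonempty (ι ≃ κ) :=
  nonempty_equiv_of_mutual_refinement hY.irredundant hZ.irredundant (hY.exists_subset hZ)
    (hZ.exists_subset hY)

end IsIrreducibleDecomposition

end IrreducibleDecomposition

section Sorting

variable {α : Type*} [LinearOrder α] {n : ℕ}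

theorem exists_perm_monotone_comp_of_forall_le {P : Fin (n + 1) → α} {a : Fin (n + 1)}
    (ha : ∀ i, P a ≤ P i) : ∃ τ : Equiv.Perm (Fin (n + 1)), Monotone (P ∘ τ) ∧ τ 0 = a := by
  let σ := Tuple.sort P
  have hσ : Monotone (P ∘ σ) := Tuple.monotone_sort P
  have htie : P (σ 0) = P a := by
    refine le_antisymm ?_ (ha _)
    simpa using hσ (Fin.zero_le (σ.symm a))
  have hcomp : P ∘ σ.trans (Equiv.swap (σ 0) a) = P ∘ σ :=
    funext fun i => Equiv.apply_swap_eq_self htie (σ i)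
  exact ⟨σ.trans (Equiv.swap (σ 0) a), hcomp ▸ hσ, Equiv.swap_apply_left _ _⟩

theorem exists_perm_monotone_comp_of_ne_of_forall_le {P : Fin (n + 2) → α} {a b : Fin (n + 2)}
    (hab : a ≠ b) (ha : ∀ i, P a ≤ P i) (hb : ∀ i, P b ≤ P i) :
    ∃ τ : Equiv.Perm (Fin (n + 2)), Monotone (P ∘ τ) ∧ τ 0 = a ∧ τ 1 = b := by
  obtain ⟨σ, hσ, rfl⟩ := exists_perm_monotone_comp_of_forall_le ha
  have htie : P (σ 1) = P b := by
    refine le_antisymm ?_ (hb _)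
    have hpos : 1 ≤ σ.symm b :=
      Fin.one_le_of_ne_zero fun h => hab ((Equiv.symm_apply_eq σ).1 h).symm
    simpa using hσ hpos
  have hcomp : P ∘ σ.trans (Equiv.swap (σ 1) b) = P ∘ σ :=
    funext fun i => Equiv.apply_swap_eq_self htie (σ i)
  exact ⟨σ.trans (Equiv.swap (σ 1) b), hcomp ▸ hσ,
    Equiv.swap_apply_of_ne_of_ne (σ.injective.ne zero_ne_one) hab, Equiv.swap_apply_left _ _⟩

end Sorting

section RankPoint

variable {n l : ℕ}

/-- The point whose `k + 1` coordinates `τ 0, …, τ k` share the least value and whose remaining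
coordinates increase strictly along `τ`. The least value is `k`, so that the rank of every later
coordinate is its value. -/
def rankPoint (h : n ≤ l) (k : Fin n) (τ : Equiv.Perm (Fin n)) : Fin n → Fin l :=
  fun i => Fin.castLE h (max k (τ.symm i))

theorem rankPoint_le_rankPoint_iff {h : n ≤ l} {k : Fin n} {τ : Equiv.Perm (Fin n)}
    {i j : Fin n} : rankPoint h k τ i ≤ rankPoint h k τ j ↔
      max k (τ.symm i) ≤ max k (τ.symm j) :=
  Fin.castLE_le_castLE_iff h

theorem monotone_rankPoint_comp (h : n ≤ l) (k : Fin n) (τ : Equiv.Perm (Fin n)) :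
    Monotone (rankPoint h k τ ∘ τ) := fun i j hij => by
  simpa only [Function.comp_apply, rankPoint_le_rankPoint_iff, Equiv.symm_apply_apply]
    using max_le_max_left k hij

theorem mem_pointClosure_rankPoint_iff {h : n ≤ l} {k : Fin n} {τ : Equiv.Perm (Fin n)}
    {Q : Fin n → Fin l} : Q ∈ pointClosure (rankPoint h k τ) ↔
      Monotone (Q ∘ τ) ∧ ∀ i ≤ k, Q (τ k) ≤ Q (τ i) := by
  constructor
  · intro hQ
    refine ⟨fun i j hij => hQ _ _ (monotone_rankPoint_comp h k τ hij), fun i _ => hQ _ _ ?_⟩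
    simp [rankPoint_le_rankPoint_iff]
  · rintro ⟨hmono, htie⟩ i j hij
    obtain ⟨i, rfl⟩ := τ.surjective i
    obtain ⟨j, rfl⟩ := τ.surjective j
    rw [rankPoint_le_rankPoint_iff, τ.symm_apply_apply, τ.symm_apply_apply] at hij
    rcases le_total i j with h_le | h_le
    · exact hmono h_le
    · have hik : i ≤ k ∨ i = j := by grind
      rcases hik with hik | rfl
      · exact (hmono hik).trans (htie j (h_le.trans hik))
      · exact le_rfl

theorem max_symm_apply_eq_of_rankPoint_mem {h : n ≤ l} {k k' : Fin n}
    {σ τ : Equiv.Perm (Fin n)} (hmem : rankPoint h k σ ∈ pointClosure (rankPoint h k' τ))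
    (i : Fin n) : max k (σ.symm (τ i)) = max k i := by
  have hsorted := Tuple.unique_monotone (mem_pointClosure_rankPoint_iff.1 hmem).1
    (monotone_rankPoint_comp h k σ)
  simpa [rankPoint] using congrFun hsorted i

theorem symm_apply_le_of_rankPoint_mem {h : n ≤ l} {k k' : Fin n} {σ τ : Equiv.Perm (Fin n)}
    (hmem : rankPoint h k σ ∈ pointClosure (rankPoint h k' τ)) {i : Fin n} (hik : i ≤ k) :
    σ.symm (τ i) ≤ k := by
  simpa [hik] using max_symm_apply_eq_of_rankPoint_mem hmem i

theorem apply_eq_of_rankPoint_mem {h : n ≤ l} {k k' : Fin n} {σ τ : Equiv.Perm (Fin n)}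
    (hmem : rankPoint h k σ ∈ pointClosure (rankPoint h k' τ)) {i : Fin n} (hki : k < i) :
    τ i = σ i := by
  have hmax := max_symm_apply_eq_of_rankPoint_mem hmem i
  rw [← Equiv.symm_apply_eq]
  grind

end RankPoint

section CountingPermutations

open scoped Nat

variable {α : Type*} [Fintype α] [DecidableEq α]

theorem card_perm_extending {s : Finset α} {f : s → α} (hf : Function.Injective f) :
    Finset.card {τ : Equiv.Perm α | ∀ x : s, τ x = f x} = (Fintype.card α - s.card)! := by
  let e : (s : Set α) ≃ Set.range f := Equiv.ofInjective f hf
  let e_compl : ((s : Set α)ᶜ : Set α) ≃ ((Set.range f)ᶜ : Set α) := e.toCompl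
  calc Finset.card {τ : Equiv.Perm α | ∀ x : s, τ x = f x}
      = Fintype.card {τ : α ≃ α // ∀ x : (s : Set α), τ x = e x} :=
        (Fintype.card_subtype _).symm
    _ = (Fintype.card ((s : Set α)ᶜ : Set α))! := by
        rw [Fintype.card_congr (Equiv.Set.compl e), Fintype.card_equiv e_compl]
    _ = (Fintype.card α - s.card)! := by
        rw [Fintype.card_compl_set, ← Fintype.card_coe s]; rfl

theorem card_perm_mapping_into {s : Finset α} {S : α → Finset α}
    (hS : (s : Set α).PairwiseDisjoint S) :
    Finset.card {τ : Equiv.Perm α | ∀ x ∈ s, τ x ∈ S x} =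
      (∏ x ∈ s, (S x).card) * (Fintype.card α - s.card)! := by
  let restrict (τ : Equiv.Perm α) (x : s) : α := τ x
  have hmaps : ∀ τ ∈ ({τ | ∀ x ∈ s, τ x ∈ S x} : Finset (Equiv.Perm α)),
      restrict τ ∈ Fintype.piFinset fun x : s => S x := by
    intro τ hτ
    simpa [restrict] using hτ
  have hfiber : ∀ f ∈ Fintype.piFinset fun x : s => S x,
      Finset.card {τ ∈ ({τ | ∀ x ∈ s, τ x ∈ S x} : Finset (Equiv.Perm α)) | restrict τ = f} =
        (Fintype.card α - s.card)! := by
    intro f hf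
    rw [Fintype.mem_piFinset] at hf
    have hinj : Function.Injective f := fun x y hxy => by
      by_contra hne
      exact Finset.disjoint_left.1 (hS x.2 y.2 (Subtype.coe_injective.ne hne)) (hf x) (hxy ▸ hf y)
    rw [← card_perm_extending hinj, Finset.filter_filter]
    congr 1
    ext τ
    simp only [Finset.mem_filter_univ, restrict, funext_iff]
    exact and_iff_right_of_imp fun hτ x hx => hτ ⟨x, hx⟩ ▸ hf ⟨x, hx⟩
  rw [Finset.card_eq_sum_card_fiberwise hmaps, Finset.sum_congr rfl hfiber, Finset.sum_const,
    smul_eq_mul, Fintype.card_piFinset, Finset.prod_coe_sort s fun x => (S x).card]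

end CountingPermutations

section Components

open scoped Nat

variable {n l : ℕ} {A B : Finset (Fin (n + 2))}

/-- The orders in which a generic solution of the equation `(A, B)` with a single least coordinate
may list its coordinates. -/
def singleMinPerms (A B : Finset (Fin (n + 2))) : Finset (Equiv.Perm (Fin (n + 2))) :=
  {τ | τ 0 ∈ A ∩ B}

/-- The orders in which a generic solution of the equation `(A, B)` with exactly two least
coordinates may list its coordinates; of the two, the one in `A \ B` is listed first. -/
def doubleMinPerms (A B : Finset (Fin (n + 2))) : Finset (Equiv.Perm (Fin (n + 2))) :=
  {τ | τ 0 ∈ A \ B ∧ τ 1 ∈ B \ A}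

/-- The pairs `(k, τ)` such that `rankPoint _ k τ` is the generic point of a component of the
solution set of the equation `(A, B)`. -/
def componentIndex (A B : Finset (Fin (n + 2))) :
    Finset (Fin (n + 2) × Equiv.Perm (Fin (n + 2))) :=
  {0} ×ˢ singleMinPerms A B ∪ {1} ×ˢ doubleMinPerms A B

theorem mem_componentIndex_iff {k : Fin (n + 2)} {τ : Equiv.Perm (Fin (n + 2))} :
    (k, τ) ∈ componentIndex A B ↔
      k = 0 ∧ τ 0 ∈ A ∩ B ∨ k = 1 ∧ τ 0 ∈ A \ B ∧ τ 1 ∈ B \ A := by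
  simp [componentIndex, singleMinPerms, doubleMinPerms, and_comm, eq_comm]

theorem card_singleMinPerms (A B : Finset (Fin (n + 2))) :
    (singleMinPerms A B).card = (A ∩ B).card * (n + 1)! := by
  have hdisj : (({0} : Finset (Fin (n + 2))) : Set (Fin (n + 2))).PairwiseDisjoint
      fun _ => A ∩ B := by
    simp
  simpa [singleMinPerms] using card_perm_mapping_into hdisj

theorem card_doubleMinPerms (A B : Finset (Fin (n + 2))) :
    (doubleMinPerms A B).card = (A \ B).card * (B \ A).card * n ! := by
  have hdisj : (({0, 1} : Finset (Fin (n + 2))) : Set (Fin (n + 2))).PairwiseDisjoint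
      fun i => if i = 0 then A \ B else B \ A := by
    simp [Set.pairwiseDisjoint_insert, disjoint_sdiff_sdiff]
  simpa [doubleMinPerms] using card_perm_mapping_into hdisj

theorem card_componentIndex (A B : Finset (Fin (n + 2))) : (componentIndex A B).card =
    (A ∩ B).card * (n + 1)! + (A \ B).card * (B \ A).card * n ! := by
  have hdisj : Disjoint (({0} : Finset (Fin (n + 2))) ×ˢ singleMinPerms A B)
      ({1} ×ˢ doubleMinPerms A B) :=
    Finset.disjoint_product.2 (Or.inl (Finset.disjoint_singleton.2 zero_ne_one))
  rw [componentIndex, Finset.card_union_of_disjoint hdisj, Finset.card_product,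
    Finset.card_product, Finset.card_singleton, Finset.card_singleton, one_mul, one_mul,
    card_singleMinPerms, card_doubleMinPerms]

theorem fin_eq_zero_or_eq_one_of_le_one {i : Fin (n + 2)} (hi : i ≤ 1) : i = 0 ∨ i = 1 := by
  simp only [Fin.ext_iff, Fin.le_def, Fin.val_zero, Fin.val_one] at *
  omega

theorem eq_of_rankPoint_mem_pointClosure {h : n + 2 ≤ l} {k k' : Fin (n + 2)}
    {σ τ : Equiv.Perm (Fin (n + 2))} (hσ : (k, σ) ∈ componentIndex A B)
    (hτ : (k', τ) ∈ componentIndex A B)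
    (hmem : rankPoint h k σ ∈ pointClosure (rankPoint h k' τ)) : (k, σ) = (k', τ) := by
  rcases mem_componentIndex_iff.1 hσ with ⟨rfl, hσ₀⟩ | ⟨rfl, hσ₀, hσ₁⟩
  · have h₀ : τ 0 = σ 0 :=
      (Equiv.symm_apply_eq σ).1 (Fin.le_zero_iff.1 (symm_apply_le_of_rankPoint_mem hmem le_rfl))
    have hστ : σ = τ := Equiv.ext fun i => by
      rcases eq_or_ne i 0 with rfl | hi
      · exact h₀.symm
      · exact (apply_eq_of_rankPoint_mem hmem (Fin.pos_iff_ne_zero.2 hi)).symm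
    grind [mem_componentIndex_iff]
  · have hlow : ∀ i ≤ 1, τ i = σ 0 ∨ τ i = σ 1 := fun i hi => by
      rw [← Equiv.symm_apply_eq, ← Equiv.symm_apply_eq]
      exact fin_eq_zero_or_eq_one_of_le_one (symm_apply_le_of_rankPoint_mem hmem hi)
    have h₀ := hlow 0 (Fin.zero_le 1)
    have h₁ := hlow 1 le_rfl
    -- `σ 0` and `σ 1` lie outside `A ∩ B`, and only `σ 0` lies in `A`.
    obtain ⟨rfl, hτ₀, hτ₁⟩ : k' = 1 ∧ τ 0 = σ 0 ∧ τ 1 = σ 1 := by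
      grind [mem_componentIndex_iff]
    have hστ : σ = τ := Equiv.ext fun i => by
      rcases le_or_gt i 1 with hi | hi
      · rcases fin_eq_zero_or_eq_one_of_le_one hi with rfl | rfl
        · exact hτ₀.symm
        · exact hτ₁.symm
      · exact (apply_eq_of_rankPoint_mem hmem hi).symm
    rw [hστ]

theorem rankPoint_mem_solutionSet {h : n + 2 ≤ l} {hA : A.Nonempty} {hB : B.Nonempty}
    {k : Fin (n + 2)} {τ : Equiv.Perm (Fin (n + 2))} (hτ : (k, τ) ∈ componentIndex A B) :
    rankPoint h k τ ∈ solutionSet l A B hA hB := by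
  rw [mem_solutionSet_iff]
  rcases mem_componentIndex_iff.1 hτ with ⟨rfl, hτ₀⟩ | ⟨rfl, hτ₀, hτ₁⟩
  · rw [Finset.mem_inter] at hτ₀
    exact ⟨τ 0, hτ₀.1, τ 0, hτ₀.2, rfl, fun i _ => by simp [rankPoint_le_rankPoint_iff]⟩
  · rw [Finset.mem_sdiff] at hτ₀ hτ₁
    exact ⟨τ 0, hτ₀.1, τ 1, hτ₁.1, by simp [rankPoint], fun i _ => by
      simp [rankPoint_le_rankPoint_iff]⟩

theorem exists_mem_pointClosure_rankPoint (h : n + 2 ≤ l) (hAB : A ∪ B = Finset.univ)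
    {hA : A.Nonempty} {hB : B.Nonempty} {P : Fin (n + 2) → Fin l}
    (hP : P ∈ solutionSet l A B hA hB) :
    ∃ (k : Fin (n + 2)) (τ : Equiv.Perm (Fin (n + 2))),
      (k, τ) ∈ componentIndex A B ∧ P ∈ pointClosure (rankPoint h k τ) := by
  simp only [mem_componentIndex_iff, mem_pointClosure_rankPoint_iff]
  obtain ⟨a, ha, b, hb, hab, hmin⟩ := mem_solutionSet_iff.1 hP
  have ha_min : ∀ i, P a ≤ P i := fun i => hmin i (hAB ▸ Finset.mem_univ i)
  have of_mem_inter {c : Fin (n + 2)} (hc : c ∈ A ∩ B) (hc_min : ∀ i, P c ≤ P i) :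
      ∃ (k : Fin (n + 2)) (τ : Equiv.Perm (Fin (n + 2))),
        (k = 0 ∧ τ 0 ∈ A ∩ B ∨ k = 1 ∧ τ 0 ∈ A \ B ∧ τ 1 ∈ B \ A) ∧
        Monotone (P ∘ τ) ∧ ∀ i ≤ k, P (τ k) ≤ P (τ i) := by
    obtain ⟨τ, hτ, rfl⟩ := exists_perm_monotone_comp_of_forall_le hc_min
    exact ⟨0, τ, Or.inl ⟨rfl, hc⟩, hτ, fun i _ => hc_min _⟩
  by_cases haB : a ∈ B
  · exact of_mem_inter (Finset.mem_inter.2 ⟨ha, haB⟩) ha_min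
  by_cases hbA : b ∈ A
  · exact of_mem_inter (Finset.mem_inter.2 ⟨hbA, hb⟩) (hab ▸ ha_min)
  obtain ⟨τ, hτ, rfl, rfl⟩ := exists_perm_monotone_comp_of_ne_of_forall_le
    (ne_of_mem_of_not_mem ha hbA) ha_min (hab ▸ ha_min)
  exact ⟨1, τ, Or.inr ⟨rfl, Finset.mem_sdiff.2 ⟨ha, haB⟩, Finset.mem_sdiff.2 ⟨hb, hbA⟩⟩, hτ,
    fun i _ => hab ▸ ha_min _⟩

theorem isIrreducibleDecomposition_solutionSet (h : n + 2 ≤ l) (hAB : A ∪ B = Finset.univ)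
    (hA : A.Nonempty) (hB : B.Nonempty) :
    IsIrreducibleDecomposition (solutionSet l A B hA hB)
      fun x : componentIndex A B => pointClosure (rankPoint h x.1.1 x.1.2) where
  irreducible _ := ⟨isAlgebraicSet_pointClosure _, isIrreducibleAlg_pointClosure _⟩
  irredundant x y hxy hsub := hxy <| Subtype.ext <|
    eq_of_rankPoint_mem_pointClosure x.2 y.2 (pointClosure_subset_iff.1 hsub)
  iUnion_eq := by
    refine (Set.iUnion_subset fun x =>
      pointClosure_subset_solutionSet (rankPoint_mem_solutionSet x.2)).antisymm fun P hP => ?_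
    obtain ⟨k, τ, hτ, hPτ⟩ := exists_mem_pointClosure_rankPoint h hAB hP
    exact Set.mem_iUnion.2 ⟨⟨(k, τ), hτ⟩, hPτ⟩

end Components

/-- Let 2 ≤ n ≤ l and let (A, B) be a pair of nonempty subsets of `Fin n` with
`A ∪ B = Fin n`, `|A \ B| = k1` and `|B \ A| = k2`. Then there exist irreducible algebraic
sets Y₁, …, Yₘ with Yᵢ ⊄ Yⱼ for all i ≠ j such that `V(A,B) = Y₁ ∪ … ∪ Yₘ` and
`m = (n − k1 − k2) · (n − 1)! + k1 · k2 · (n − 2)!`; moreover, any collection of irreducible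
algebraic sets which are pairwise not contained in one another and whose union is `V(A,B)`
has exactly m members. -/
theorem stmt_9 (n l k1 k2 : ℕ) (hn : 2 ≤ n) (hnl : n ≤ l) (A B : Finset (Fin n))
    (hA : A.Nonempty) (hB : B.Nonempty) (hAB : A ∪ B = Finset.univ)
    (hk1 : (A \ B).card = k1) (hk2 : (B \ A).card = k2) :
    ∃ (m : ℕ) (Y : Fin m → Set (Fin n → Fin l)),
      m = (n - k1 - k2) * (n - 1).factorial + k1 * k2 * (n - 2).factorial ∧
      (∀ i, IsAlgebraicSet n l (Y i) ∧ IsIrreducibleAlg n l (Y i)) ∧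
      (∀ i j, i ≠ j → ¬ Y i ⊆ Y j) ∧
      (⋃ i, Y i) = solutionSet l A B hA hB ∧
      (∀ (k : ℕ) (Z : Fin k → Set (Fin n → Fin l)),
        (∀ i, IsAlgebraicSet n l (Z i) ∧ IsIrreducibleAlg n l (Z i)) →
        (∀ i j, i ≠ j → ¬ Z i ⊆ Z j) →
        (⋃ i, Z i) = solutionSet l A B hA hB →
        k = m) := by
  obtain ⟨N, rfl⟩ : ∃ N, n = N + 2 := ⟨n - 2, by omega⟩
  have hY := (isIrreducibleDecomposition_solutionSet hnl hAB hA hB).comp_equiv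
    (componentIndex A B).equivFin.symm
  refine ⟨(componentIndex A B).card, _, ?_, hY.irreducible, hY.irredundant, hY.iUnion_eq,
    fun k Z hZ hZ' hZV => Fin.equiv_iff_eq.1 ?_⟩
  · have hcard : (A ∩ B).card = N + 2 - k1 - k2 := by
      have hsdiff := Finset.card_sdiff_add_card_inter A B
      have hunion := Finset.card_sdiff_add_card B A
      rw [Finset.union_comm, hAB, Finset.card_univ, Fintype.card_fin] at hunion
      omega
    rw [card_componentIndex, hcard, hk1, hk2]
    rfl
  · exact IsIrreducibleDecomposition.nonempty_equiv ⟨hZ, hZ', hZV⟩ hY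
end

section
/- Let n, l ≥ 1. Every algebraic set Y ⊆ (Fin n → Fin l) is a finite union Y = Y_1 ∪ … ∪ Y_m of irreducible algebraic sets with Y_i ⊄ Y_j for all i ≠ j, and this decomposition is unique up to a permutation of the components: if Y = Z_1 ∪ … ∪ Z_k is another such union of irreducible algebraic sets pairwise not contained in one another, then {Z_1, …, Z_k} = {Y_1, …, Y_m} as sets of sets. -/
/-!
Algebraic sets are closed under intersection but not under union. In a distributive lattice, an
element irreducible with respect to finite joins from a meet-closed family `C` is also prime: if
`a ≤ ⋁ fᵢ` then `a = ⋁ (a ⊓ fᵢ)` is again a join from `C`. So, given two irredundant decompositions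
of the same element, each component of one lies below a component of the other, and mutually
cofinal antichains coincide. Existence is Noetherian induction followed by discarding the
non-maximal components.
-/

section Antichain

variable {α : Type*}

theorem isAntichain_range_of_forall_not_le [LE α] {ι : Type*} {f : ι → α}
    (h : ∀ i j, i ≠ j → ¬ f i ≤ f j) : IsAntichain (· ≤ ·) (Set.range f) :=
  Pairwise.range_pairwise fun i j hij => h i j hij

theorem eq_of_isAntichain_of_lowerClosure_eq [PartialOrder α] {s t : Set α}
    (hs : IsAntichain (· ≤ ·) s) (ht : IsAntichain (· ≤ ·) t)
    (h : lowerClosure s = lowerClosure t) : s = t := by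
  ext a
  rw [← hs.maximal_mem_lowerClosure_iff_mem, h, ht.maximal_mem_lowerClosure_iff_mem]

theorem exists_antichain_subset_sup_eq [SemilatticeSup α] [OrderBot α] (s : Finset α) :
    ∃ t ⊆ s, IsAntichain (· ≤ ·) (t : Set α) ∧ t.sup id = s.sup id := by
  classical
  refine ⟨{b ∈ s | Maximal (· ∈ s) b}, Finset.filter_subset _ _, ?_, le_antisymm ?_ ?_⟩
  · exact (setOfPred_maximal_antichain (· ∈ s)).subset fun b hb => (Finset.mem_filter.1 hb).2
  · exact Finset.sup_mono (Finset.filter_subset _ _)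
  · refine Finset.sup_le fun b hb => ?_
    obtain ⟨c, hbc, hc⟩ := s.exists_le_maximal hb
    exact hbc.trans (Finset.le_sup (f := id) (Finset.mem_filter.2 ⟨hc.prop, hc⟩))

theorem exists_fin_antichain_sup_eq [SemilatticeSup α] [OrderBot α] (s : Finset α) :
    ∃ (m : ℕ) (f : Fin m → α), (∀ i, f i ∈ s) ∧ (∀ i j, i ≠ j → ¬ f i ≤ f j) ∧
      Finset.univ.sup f = s.sup id := by
  classical
  obtain ⟨t, hts, ht, hsup⟩ := exists_antichain_subset_sup_eq s
  obtain ⟨m, f, hf, hrange⟩ := t.finite_toSet.fin_param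
  have hmem (i : Fin m) : f i ∈ t := Finset.mem_coe.1 (hrange ▸ Set.mem_range_self i)
  have himage : Finset.univ.image f = t := by
    rw [← Finset.coe_inj, Finset.coe_image, Finset.coe_univ, Set.image_univ, hrange]
  refine ⟨m, f, fun i => hts (hmem i), fun i j hij => ht (hmem i) (hmem j) (hf.ne hij), ?_⟩
  rw [← hsup, ← himage, Finset.sup_image, Function.id_comp]

end Antichain

section Irreducible

variable {L : Type*}

/-- `a` is irreducible with respect to finite joins of elements of `C`: whenever it is such a join,
it is one of the joinands. Since `C` need not be closed under `⊔`, binary joins would not suffice;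
the case `m = 0` makes `⊥` reducible. -/
def IsFinSupIrredIn [SemilatticeSup L] [OrderBot L] (C : Set L) (a : L) : Prop :=
  ∀ (m : ℕ) (f : Fin m → L), (∀ i, f i ∈ C) → a = Finset.univ.sup f → ∃ i, a = f i

theorem exists_finset_isFinSupIrredIn_sup_eq [SemilatticeSup L] [OrderBot L] {C : Set L}
    (hwf : C.WellFoundedOn (· < ·)) {a : L} (ha : a ∈ C) :
    ∃ s : Finset L, (∀ b ∈ s, b ∈ C ∧ IsFinSupIrredIn C b) ∧ s.sup id = a := by
  classical
  apply hwf.induction ha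
  intro a ha ih
  by_cases hirr : IsFinSupIrredIn C a
  · exact ⟨{a}, by simp [ha, hirr], by simp⟩
  · simp only [IsFinSupIrredIn, not_forall, not_exists] at hirr
    obtain ⟨m, f, hfC, rfl, hne⟩ := hirr
    have hlt (i : Fin m) : f i < Finset.univ.sup f :=
      (Finset.le_sup (Finset.mem_univ i)).lt_of_ne' (hne i)
    choose t ht hsup using fun i => ih (f i) (hfC i) (hlt i)
    refine ⟨Finset.univ.biUnion t, fun b hb => ?_, ?_⟩
    · obtain ⟨i, -, hbi⟩ := Finset.mem_biUnion.1 hb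
      exact ht i b hbi
    · simp only [Finset.sup_biUnion, hsup]

variable [DistribLattice L] [OrderBot L] {C : Set L}

theorem IsFinSupIrredIn.exists_le (hC : InfClosed C) {a : L} (ha : a ∈ C)
    (hirr : IsFinSupIrredIn C a) {m : ℕ} {f : Fin m → L} (hf : ∀ i, f i ∈ C)
    (hle : a ≤ Finset.univ.sup f) : ∃ i, a ≤ f i := by
  obtain ⟨i, hi⟩ := hirr m (fun i => a ⊓ f i) (fun i => hC ha (hf i)) <| by
    rw [← Finset.sup_inf_distrib_left, inf_eq_left.2 hle]
  exact ⟨i, inf_eq_left.1 hi.symm⟩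

theorem lowerClosure_range_le_of_sup_le (hC : InfClosed C) {m k : ℕ}
    {f : Fin m → L} {g : Fin k → L} (hf : ∀ i, f i ∈ C ∧ IsFinSupIrredIn C (f i))
    (hg : ∀ j, g j ∈ C) (h : Finset.univ.sup f ≤ Finset.univ.sup g) :
    lowerClosure (Set.range f) ≤ lowerClosure (Set.range g) := by
  refine lowerClosure_le.2 ?_
  rintro _ ⟨i, rfl⟩
  obtain ⟨j, hij⟩ := (hf i).2.exists_le hC (hf i).1 hg ((Finset.le_sup (Finset.mem_univ i)).trans h)
  exact ⟨g j, Set.mem_range_self j, hij⟩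

theorem range_eq_of_irredundant_of_sup_eq (hC : InfClosed C) {m k : ℕ}
    {f : Fin m → L} {g : Fin k → L}
    (hf : ∀ i, f i ∈ C ∧ IsFinSupIrredIn C (f i)) (hg : ∀ j, g j ∈ C ∧ IsFinSupIrredIn C (g j))
    (hf_anti : ∀ i j, i ≠ j → ¬ f i ≤ f j) (hg_anti : ∀ i j, i ≠ j → ¬ g i ≤ g j)
    (h : Finset.univ.sup f = Finset.univ.sup g) : Set.range f = Set.range g :=
  eq_of_isAntichain_of_lowerClosure_eq (isAntichain_range_of_forall_not_le hf_anti)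
    (isAntichain_range_of_forall_not_le hg_anti) <|
    le_antisymm (lowerClosure_range_le_of_sup_le hC hf (fun j => (hg j).1) h.le)
      (lowerClosure_range_le_of_sup_le hC hg (fun i => (hf i).1) h.ge)

theorem stmt_11_general (hC : InfClosed C) (hwf : C.WellFoundedOn (· < ·)) {a : L} (ha : a ∈ C) :
    ∃ (m : ℕ) (f : Fin m → L),
      (∀ i, f i ∈ C ∧ IsFinSupIrredIn C (f i)) ∧
      (∀ i j, i ≠ j → ¬ f i ≤ f j) ∧
      a = Finset.univ.sup f ∧
      (∀ (k : ℕ) (g : Fin k → L),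
        (∀ i, g i ∈ C ∧ IsFinSupIrredIn C (g i)) →
        (∀ i j, i ≠ j → ¬ g i ≤ g j) →
        a = Finset.univ.sup g →
        Set.range g = Set.range f) := by
  obtain ⟨s, hs, rfl⟩ := exists_finset_isFinSupIrredIn_sup_eq hwf ha
  obtain ⟨m, f, hfs, hf_anti, hsup⟩ := exists_fin_antichain_sup_eq s
  have hf (i : Fin m) : f i ∈ C ∧ IsFinSupIrredIn C (f i) := hs (f i) (hfs i)
  refine ⟨m, f, hf, hf_anti, hsup.symm, fun k g hg hg_anti hg_sup => ?_⟩
  exact range_eq_of_irredundant_of_sup_eq hC hg hf hg_anti hf_anti (hg_sup.symm.trans hsup.symm)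

end Irreducible

theorem infClosed_isAlgebraicSet (n l : ℕ) : InfClosed {Y | IsAlgebraicSet n l Y} := by
  rintro _ ⟨I, A, B, hA, hB, rfl⟩ _ ⟨J, A', B', hA', hB', rfl⟩
  refine ⟨I ⊕ J, Sum.elim A A', Sum.elim B B', Sum.forall.2 ⟨hA, hA'⟩, Sum.forall.2 ⟨hB, hB'⟩, ?_⟩
  rw [Set.iInter_sum]
  rfl

theorem isFinSupIrredIn_isAlgebraicSet_iff {n l : ℕ} {Y : Set (Fin n → Fin l)} :
    IsFinSupIrredIn {X | IsAlgebraicSet n l X} Y ↔ IsIrreducibleAlg n l Y := by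
  simp only [IsFinSupIrredIn, IsIrreducibleAlg, Set.mem_ofPred_eq, Finset.sup_univ_eq_iSup,
    Set.iSup_eq_iUnion]

/-- Let n, l ≥ 1. Every algebraic set `Y ⊆ (Fin n → Fin l)` is a finite union
`Y = Y₁ ∪ … ∪ Yₘ` of irreducible algebraic sets with `Yᵢ ⊄ Yⱼ` for all i ≠ j, and this
decomposition is unique up to a permutation of the components: any other such union of
irreducible algebraic sets pairwise not contained in one another gives the same collection
of sets. -/
theorem stmt_11 (n l : ℕ) (hn : 1 ≤ n) (hl : 1 ≤ l) (Y : Set (Fin n → Fin l))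
    (hY : IsAlgebraicSet n l Y) :
    ∃ (m : ℕ) (Ys : Fin m → Set (Fin n → Fin l)),
      (∀ i, IsAlgebraicSet n l (Ys i) ∧ IsIrreducibleAlg n l (Ys i)) ∧
      (∀ i j, i ≠ j → ¬ Ys i ⊆ Ys j) ∧
      Y = ⋃ i, Ys i ∧
      (∀ (k : ℕ) (Z : Fin k → Set (Fin n → Fin l)),
        (∀ i, IsAlgebraicSet n l (Z i) ∧ IsIrreducibleAlg n l (Z i)) →
        (∀ i j, i ≠ j → ¬ Z i ⊆ Z j) →
        Y = ⋃ i, Z i →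
        Set.range Z = Set.range Ys) := by
  simpa only [isFinSupIrredIn_isAlgebraicSet_iff, Finset.sup_univ_eq_iSup,
    Set.iSup_eq_iUnion, Set.mem_ofPred_eq] using
    stmt_11_general (infClosed_isAlgebraicSet n l) (Set.toFinite _).wellFoundedOn hY
end

section
/- Let 1 ≤ n ≤ l and let σ be a permutation of Fin n, and set Y_σ = {P : Fin n → Fin l | P(σ(1)) ≤ P(σ(2)) ≤ … ≤ P(σ(n))}. Define an equivalence relation on nonempty subsets of Fin n by A ∼ B iff min_{i∈A} P(i) = min_{j∈B} P(j) for every P ∈ Y_σ. Then ∼ has exactly n equivalence classes; equivalently, the coordinate semilattice Γ(Y_σ) has exactly n elements. -/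
/-- Terms in n variables over a linearly ordered semilattice are identified with nonempty
subsets of `Fin n`; the term `A` evaluates at a point `P : Fin n → Fin l` to
`min_{i ∈ A} P i`.  Two terms are equivalent over a set `Y` of points when they take equal
values at every point of `Y`; the coordinate semilattice `Γ(Y)` is the quotient of the set
of terms by this relation. -/
def coordSetoid (n l : ℕ) (Y : Set (Fin n → Fin l)) :
    Setoid {A : Finset (Fin n) // A.Nonempty} :=
  ⟨fun A B => ∀ P ∈ Y, A.1.inf' A.2 P = B.1.inf' B.2 P,
   ⟨fun _ _ _ => rfl,
    fun h P hP => (h P hP).symm,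
    fun h1 h2 P hP => (h1 P hP).trans (h2 P hP)⟩⟩

/-!
On a point `P` with `P ∘ σ` monotone, a term `A` takes the same value as its single variable `a`
for which `σ⁻¹ a` is least, since monotone maps out of a chain preserve minima. Hence every class
contains a variable. Conversely, any two variables are separated by a monotone step function, which
takes only two values.
-/

section

variable {ι V L : Type*} [SemilatticeInf L]

/-- Equality on `Y` of semilattice terms in variables `V`, encoded as nonempty finite sets of
variables. This is `coordSetoid` for an arbitrary set of variables and an arbitrary semilattice of
values, to which it specializes definitionally. -/
def termSetoid (Y : Set (V → L)) : Setoid {A : Finset V // A.Nonempty} where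
  r A B := ∀ P ∈ Y, A.1.inf' A.2 P = B.1.inf' B.2 P
  iseqv :=
    ⟨fun _ _ _ => rfl, fun h P hP => (h P hP).symm, fun h₁ h₂ P hP => (h₁ P hP).trans (h₂ P hP)⟩

/-- The generator of the coordinate semilattice `Γ(Y)` given by the variable `v`, that is, the class
of the one-variable term `{v}`. -/
def varClass (Y : Set (V → L)) (v : V) : Quotient (termSetoid Y) :=
  Quotient.mk _ ⟨{v}, Finset.singleton_nonempty v⟩

theorem varClass_eq_mk_iff {Y : Set (V → L)} {v : V} {A : {A : Finset V // A.Nonempty}} :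
    varClass Y v = Quotient.mk _ A ↔ ∀ P ∈ Y, P v = A.1.inf' A.2 P :=
  Quotient.eq

theorem varClass_eq_varClass_iff {Y : Set (V → L)} {u v : V} :
    varClass Y u = varClass Y v ↔ ∀ P ∈ Y, P u = P v :=
  varClass_eq_mk_iff

theorem exists_monotone_apply_ne {M : Type*} [PartialOrder ι] [Preorder M] {x y : M} (hxy : x < y)
    {i j : ι} (hij : i ≠ j) : ∃ f : ι → M, Monotone f ∧ f i ≠ f j := by
  classical
  wlog hji : ¬ j ≤ i generalizing i j
  · obtain ⟨f, hf, hne⟩ := this hij.symm fun hle => hij (hle.antisymm (not_not.mp hji))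
    exact ⟨f, hf, hne.symm⟩
  refine ⟨fun k => if k ≤ i then x else y, fun k m hkm => ?_, by simp [hji, hxy.ne]⟩
  by_cases hm : m ≤ i
  · simp [hm, hkm.trans hm]
  · simp only [hm, if_false]
    split_ifs
    exacts [hxy.le, le_rfl]

/-- The set `Y_σ` of points that are monotone along the indexing `σ` of the variables. -/
def monotonePoints {M : Type*} [Preorder ι] [Preorder M] (σ : ι ≃ V) : Set (V → M) :=
  {P | Monotone (P ∘ σ)}

theorem varClass_monotonePoints_injective [PartialOrder ι] [Nontrivial L] (σ : ι ≃ V) :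
    Function.Injective (varClass (L := L) (monotonePoints σ)) := by
  intro u v huv
  by_contra hne
  obtain ⟨x, y, hxy⟩ := exists_lt_of_directed_ge L
  obtain ⟨f, hf, hfne⟩ := exists_monotone_apply_ne hxy (σ.symm.injective.ne hne)
  have hmem : f ∘ σ.symm ∈ monotonePoints σ := by
    simpa [monotonePoints, Function.comp_assoc] using hf
  exact hfne (varClass_eq_varClass_iff.mp huv _ hmem)

variable [LinearOrder ι]

theorem inf'_eq_apply_of_mem_monotonePoints (σ : ι ≃ V) {P : V → L} (hP : P ∈ monotonePoints σ)
    {A : Finset V} (hA : A.Nonempty) : A.inf' hA P = P (σ (A.inf' hA σ.symm)) := by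
  simpa [Function.comp_assoc] using
    (Finset.apply_inf'_eq_inf'_comp hA (f := σ.symm) (P ∘ σ) (Monotone.map_inf hP)).symm

theorem varClass_monotonePoints_surjective (σ : ι ≃ V) :
    Function.Surjective (varClass (L := L) (monotonePoints σ)) := by
  rintro ⟨A⟩
  exact ⟨σ (A.1.inf' A.2 σ.symm),
    varClass_eq_mk_iff.mpr fun P hP => (inf'_eq_apply_of_mem_monotonePoints σ hP A.2).symm⟩

theorem stmt_12_general (σ : ι ≃ V) (h : Nontrivial V → Nontrivial L) :
    Function.Bijective (varClass (L := L) (monotonePoints σ)) := by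
  refine ⟨?_, varClass_monotonePoints_surjective σ⟩
  rcases subsingleton_or_nontrivial V with _ | hV
  · exact Function.injective_of_subsingleton _
  · have := h hV
    exact varClass_monotonePoints_injective σ

end

/-- Let 1 ≤ n ≤ l and let σ be a permutation of `Fin n`, and set
`Y_σ = {P : Fin n → Fin l | P(σ(1)) ≤ P(σ(2)) ≤ … ≤ P(σ(n))}`. Define an equivalence
relation on nonempty subsets of `Fin n` by `A ∼ B` iff `min_{i∈A} P i = min_{j∈B} P j` for
every `P ∈ Y_σ`. Then `∼` has exactly n equivalence classes; equivalently, the coordinate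
semilattice `Γ(Y_σ)` has exactly n elements. -/
theorem stmt_12 (n l : ℕ) (hn : 1 ≤ n) (hnl : n ≤ l) (σ : Equiv.Perm (Fin n)) :
    Nat.card (Quotient (coordSetoid n l {P : Fin n → Fin l | Monotone fun i => P (σ i)}))
      = n := by
  have hbij := stmt_12_general (L := Fin l) σ fun _ => (Fin.castLE_injective hnl).nontrivial
  exact (Nat.card_eq_of_bijective _ hbij).symm.trans (Nat.card_fin n)
end

section
/- Let 2 ≤ n ≤ l and let σ be a permutation of Fin n, and set Y_σ = {P : Fin n → Fin l | P(σ(1)) = P(σ(2)) ≤ P(σ(3)) ≤ … ≤ P(σ(n))}. Define an equivalence relation on nonempty subsets of Fin n by A ∼ B iff min_{i∈A} P(i) = min_{j∈B} P(j) for every P ∈ Y_σ. Then ∼ has exactly n − 1 equivalence classes; equivalently, the coordinate semilattice Γ(Y_σ) has exactly n − 1 elements. -/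
/-!
A point of `Y_σ` is the same thing as a monotone function of the position `σ⁻¹ i`, with the first
two positions merged; that is, `Y_σ` consists of the maps `f ∘ r` for `f` monotone on a chain `κ`
with `n - 1` elements and a fixed surjection `r` onto `κ`. Monotone maps between chains commute
with minima, so `f ∘ r` evaluates at a term `A` to `f (min_A r)`; as monotone maps into a chain with
at least two elements separate the points of `κ`, two terms are equivalent exactly when they have
the same `min r`. Every element of `κ` is such a minimum, already of a singleton.
-/

theorem le_of_forall_orderHom_apply_le {κ α : Type*} [Preorder κ] [Preorder α] {a b : α}
    (hab : a < b) {x y : κ} (h : ∀ f : κ →o α, f x ≤ f y) : x ≤ y := by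
  classical
  let step : κ →o α :=
    { toFun := fun k => if k ≤ y then a else b
      monotone' := by
        intro k k' hk
        dsimp only
        split_ifs with hky hk'y hk'y
        exacts [le_rfl, hab.le, absurd (hk.trans hk'y) hky, le_rfl] }
  by_contra hxy
  have step_x : step x = b := if_neg hxy
  have step_y : step y = a := if_pos le_rfl
  exact hab.not_ge (step_x ▸ step_y ▸ h step)

theorem eq_of_forall_orderHom_apply_eq {κ α : Type*} [PartialOrder κ] [Preorder α] {a b : α}
    (hab : a < b) {x y : κ} (h : ∀ f : κ →o α, f x = f y) : x = y :=
  le_antisymm (le_of_forall_orderHom_apply_le hab fun f => (h f).le)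
    (le_of_forall_orderHom_apply_le hab fun f => (h f).ge)

theorem surjective_inf'_of_surjective {ι κ : Type*} [SemilatticeInf κ] {r : ι → κ}
    (hr : Function.Surjective r) :
    Function.Surjective fun A : {A : Finset ι // A.Nonempty} => A.1.inf' A.2 r := fun k =>
  let ⟨i, hi⟩ := hr k
  ⟨⟨{i}, Finset.singleton_nonempty i⟩, hi⟩

theorem coordSetoid_range_comp_eq_ker {κ : Type*} [LinearOrder κ] {n l : ℕ} [Nontrivial (Fin l)]
    (r : Fin n → κ) :
    coordSetoid n l (Set.range fun f : κ →o Fin l => f ∘ r) =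
      Setoid.ker fun A => A.1.inf' A.2 r := by
  have inf'_comp (f : κ →o Fin l) (A : {A : Finset (Fin n) // A.Nonempty}) :
      A.1.inf' A.2 (f ∘ r) = f (A.1.inf' A.2 r) :=
    (map_finset_inf' f A.2 r).symm
  ext A B
  rw [Setoid.ker_def]
  constructor
  · intro h
    obtain ⟨a, b, hab⟩ := exists_pair_lt (Fin l)
    refine eq_of_forall_orderHom_apply_eq hab fun f => ?_
    rw [← inf'_comp, ← inf'_comp]
    exact h _ ⟨f, rfl⟩
  · rintro h _ ⟨f, rfl⟩
    change A.1.inf' A.2 (f ∘ r) = B.1.inf' B.2 (f ∘ r)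
    rw [inf'_comp, inf'_comp, h]

theorem card_quotient_coordSetoid_range_comp {κ : Type*} [LinearOrder κ] {n l : ℕ}
    [Nontrivial (Fin l)] {r : Fin n → κ} (hr : Function.Surjective r) :
    Nat.card (Quotient (coordSetoid n l (Set.range fun f : κ →o Fin l => f ∘ r))) =
      Nat.card κ := by
  rw [coordSetoid_range_comp_eq_ker]
  exact Nat.card_congr
    (Setoid.quotientKerEquivOfSurjective _ (surjective_inf'_of_surjective hr))

theorem exists_orderHom_comp_predAbove_eq_iff {α : Type*} [Preorder α] {m : ℕ} (p : Fin m)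
    (g : Fin (m + 1) → α) :
    (∃ f : Fin m →o α, f ∘ p.predAbove = g) ↔ g p.castSucc = g p.succ ∧ Monotone g := by
  constructor
  · rintro ⟨f, rfl⟩
    exact ⟨by simp, f.monotone.comp p.predAbove_right_monotone⟩
  · rintro ⟨hp, hg⟩
    refine ⟨⟨g ∘ p.castSucc.succAbove, hg.comp p.castSucc.strictMono_succAbove.monotone⟩, ?_⟩
    funext i
    change g (p.castSucc.succAbove (p.predAbove i)) = g i
    obtain rfl | hi := eq_or_ne i p.castSucc
    · simp [hp]
    · rw [Fin.succAbove_predAbove hi]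

theorem setOf_apply_eq_and_monotone_eq_range {α : Type*} [Preorder α] {m : ℕ}
    (σ : Equiv.Perm (Fin (m + 1))) (p : Fin m) :
    {P : Fin (m + 1) → α | P (σ p.castSucc) = P (σ p.succ) ∧ Monotone fun i => P (σ i)} =
      Set.range fun f : Fin m →o α => f ∘ p.predAbove ∘ σ.symm := by
  ext P
  rw [Set.mem_ofPred_eq, ← exists_orderHom_comp_predAbove_eq_iff p fun i => P (σ i)]
  exact exists_congr fun f => (σ.comp_symm_eq _ _).symm

theorem stmt_13_general (n l : ℕ) [NeZero n] (hn : 2 ≤ n) (hl : 2 ≤ l)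
    (σ : Equiv.Perm (Fin n)) :
    Nat.card (Quotient (coordSetoid n l
      {P : Fin n → Fin l | P (σ 0) = P (σ 1) ∧ Monotone fun i => P (σ i)}))
      = n - 1 := by
  obtain ⟨m, rfl⟩ := Nat.exists_eq_add_of_le' hn
  have : Nontrivial (Fin l) := Fin.nontrivial_iff_two_le.mpr hl
  have hr : Function.Surjective ((0 : Fin (m + 1)).predAbove ∘ σ.symm) :=
    (Fin.predAbove_surjective _).comp σ.symm.surjective
  calc
    _ = Nat.card (Fin (m + 1)) := by
      rw [← card_quotient_coordSetoid_range_comp (l := l) hr]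
      exact congrArg (fun Y => Nat.card (Quotient (coordSetoid (m + 2) l Y)))
        (setOf_apply_eq_and_monotone_eq_range σ 0)
    _ = m + 2 - 1 := Nat.card_fin _

/-- Let 2 ≤ n ≤ l and let σ be a permutation of `Fin n`, and set
`Y_σ = {P : Fin n → Fin l | P(σ(1)) = P(σ(2)) ≤ P(σ(3)) ≤ … ≤ P(σ(n))}`. Define an
equivalence relation on nonempty subsets of `Fin n` by `A ∼ B` iff
`min_{i∈A} P i = min_{j∈B} P j` for every `P ∈ Y_σ`. Then `∼` has exactly n − 1 equivalence
classes; equivalently, the coordinate semilattice `Γ(Y_σ)` has exactly n − 1 elements.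
(Positions 1 and 2 are the indices `0, 1 : Fin n`.) -/
theorem stmt_13 (n l : ℕ) [NeZero n] (hn : 2 ≤ n) (hnl : n ≤ l) (σ : Equiv.Perm (Fin n)) :
    Nat.card (Quotient (coordSetoid n l
      {P : Fin n → Fin l | P (σ 0) = P (σ 1) ∧ Monotone fun i => P (σ i)}))
      = n - 1 :=
  stmt_13_general n l hn (hn.trans hnl) σ
end

section
/- For every natural number n ≥ 2, ∑_{(k1,k2)} (n choose k1) · ((n − k1) choose k2) · [(n − k1 − k2) · (n−1)! + k1 · k2 · (n−2)!] = 4 · n! · 3^{n−2}, where the sum ranges over all pairs (k1, k2) of natural numbers with k1 + k2 ≤ n and (k1, k2) ∉ {(0, n), (n, 0)}. -/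
/-!
With `k₃ = n - k₁ - k₂`, the weight of a pair is the trinomial coefficient of `(k₁, k₂, k₃)`, and
factorial moments of these weights have a closed form because factors `kᵢ` are absorbed into the
coefficient, as when `(x + y + z) ^ n` is differentiated. At `x = y = z = 1` the moment of `k₃` is
`n * 3 ^ (n - 1)` and that of `k₁ * k₂` is `n * (n - 1) * 3 ^ (n - 2)`. Multiplied by `(n - 1)!` and
`(n - 2)!`, they contribute `3` and `1` times `n! * 3 ^ (n - 2)`. The excluded pairs have
`k₃ = k₁ * k₂ = 0`, so they contribute nothing.
-/

section

open Finset hiding antidiagonal mem_antidiagonal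
open Finset.HasAntidiagonal

theorem add_choose_mul_descFactorial_mul_descFactorial (i j a b : ℕ) :
    (i + a + (j + b)).choose (i + a) * ((i + a).descFactorial a * (j + b).descFactorial b) =
      (i + j + (a + b)).descFactorial (a + b) * (i + j).choose i := by
  have hi : i.factorial * (i + a).descFactorial a = (i + a).factorial := by
    simpa using Nat.factorial_mul_descFactorial (Nat.le_add_left a i)
  have hj : j.factorial * (j + b).descFactorial b = (j + b).factorial := by
    simpa using Nat.factorial_mul_descFactorial (Nat.le_add_left b j)
  have hij : (i + j).factorial * (i + j + (a + b)).descFactorial (a + b) =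
      (i + j + (a + b)).factorial := by
    simpa using Nat.factorial_mul_descFactorial (Nat.le_add_left (a + b) (i + j))
  refine Nat.eq_of_mul_eq_mul_right (mul_pos i.factorial_pos j.factorial_pos) ?_
  calc
    _ = (i + a + (j + b)).choose (i + a) * (i.factorial * (i + a).descFactorial a) *
          (j.factorial * (j + b).descFactorial b) := by ring
    _ = (i + j + (a + b)).factorial := by
      rw [hi, hj, Nat.choose_symm_add, Nat.add_choose_mul_factorial_mul_factorial, add_add_add_comm]
    _ = (i + j).choose i * i.factorial * j.factorial *
          (i + j + (a + b)).descFactorial (a + b) := by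
      rw [Nat.choose_symm_add, Nat.add_choose_mul_factorial_mul_factorial, hij]
    _ = _ := by ring

theorem sum_range_product_filter_add_le {M : Type*} [AddCommMonoid M] (n : ℕ)
    (f : ℕ × ℕ → ℕ × ℕ → M) :
    ∑ p ∈ range (n + 1) ×ˢ range (n + 1) with p.1 + p.2 ≤ n,
        f (p.1, n - p.1) (p.2, n - p.1 - p.2) =
      ∑ p ∈ antidiagonal n, ∑ q ∈ antidiagonal p.2, f p q := by
  rw [sum_sigma']
  refine sum_bij' (fun p _ ↦ ⟨(p.1, n - p.1), (p.2, n - p.1 - p.2)⟩) (fun s _ ↦ (s.1.1, s.2.1))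
    ?_ ?_ ?_ ?_ ?_
  · intro p hp
    simp only [mem_filter, mem_product, mem_range] at hp
    simp only [mem_sigma, mem_antidiagonal]
    omega
  · rintro ⟨⟨i, m⟩, j, k⟩ hs
    simp only [mem_sigma, mem_antidiagonal] at hs
    simp only [mem_filter, mem_product, mem_range]
    omega
  · exact fun _ _ ↦ rfl
  · rintro ⟨⟨i, m⟩, j, k⟩ hs
    obtain ⟨rfl, rfl⟩ : i + m = n ∧ j + k = m := by simpa using hs
    simp
  · exact fun _ _ ↦ rfl

variable {R : Type*} [CommSemiring R]

-- This is the result of applying `∂ₓᵃ ∂ᵧᵇ` to the binomial expansion of `(x + y) ^ n`.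
theorem sum_antidiagonal_choose_mul_descFactorial_mul_pow (n a b : ℕ) (x y : R) :
    ∑ p ∈ antidiagonal n, (n.choose p.1 * (p.1.descFactorial a * p.2.descFactorial b) : ℕ) *
        (x ^ (p.1 - a) * y ^ (p.2 - b)) =
      n.descFactorial (a + b) * (x + y) ^ (n - (a + b)) := by
  have vanishes : ∀ p : ℕ × ℕ, p.1 < a ∨ p.2 < b →
      ((n.choose p.1 * (p.1.descFactorial a * p.2.descFactorial b) : ℕ) : R) *
        (x ^ (p.1 - a) * y ^ (p.2 - b)) = 0 := by
    rintro p (h | h) <;> simp [Nat.descFactorial_of_lt h]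
  rcases lt_or_ge n (a + b) with hn | hn
  · rw [Nat.descFactorial_of_lt hn, Nat.cast_zero, zero_mul]
    refine sum_eq_zero fun p hp ↦ vanishes p ?_
    rw [mem_antidiagonal] at hp
    omega
  obtain ⟨m, rfl⟩ := Nat.exists_eq_add_of_le' hn
  rw [Nat.add_sub_cancel, (Commute.all x y).add_pow', mul_sum]
  symm
  refine sum_of_injOn (fun p ↦ (p.1 + a, p.2 + b)) ?_ ?_ ?_ ?_
  · rintro ⟨i, j⟩ - ⟨i', j'⟩ - h
    simpa using h
  · rintro ⟨i, j⟩ hp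
    simp only [mem_coe, mem_antidiagonal] at hp ⊢
    omega
  · rintro ⟨i, j⟩ hp hnot
    refine vanishes _ ?_
    by_contra! h
    rw [mem_antidiagonal] at hp
    refine hnot ⟨(i - a, j - b), ?_, ?_⟩
    · simp only [mem_coe, mem_antidiagonal]
      omega
    · simp only [Prod.mk.injEq]
      omega
  · rintro ⟨i, j⟩ hp
    obtain rfl := mem_antidiagonal.mp hp
    simp only [Nat.add_sub_cancel, nsmul_eq_mul]
    rw [← mul_assoc, ← Nat.cast_mul, ← add_choose_mul_descFactorial_mul_descFactorial,
      add_add_add_comm]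

theorem sum_antidiagonal_trinomial_mul_descFactorial_mul_pow (n a b c : ℕ) (x y z : R) :
    ∑ p ∈ antidiagonal n, ∑ q ∈ antidiagonal p.2,
        (n.choose p.1 * p.2.choose q.1 *
            (p.1.descFactorial a * q.1.descFactorial b * q.2.descFactorial c) : ℕ) *
          (x ^ (p.1 - a) * y ^ (q.1 - b) * z ^ (q.2 - c)) =
      n.descFactorial (a + b + c) * (x + y + z) ^ (n - (a + b + c)) := by
  rw [add_assoc a, add_assoc x, ← sum_antidiagonal_choose_mul_descFactorial_mul_pow]
  refine sum_congr rfl fun p _ ↦ ?_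
  calc
    _ = (n.choose p.1 * p.1.descFactorial a : ℕ) * x ^ (p.1 - a) *
          ∑ q ∈ antidiagonal p.2,
            (p.2.choose q.1 * (q.1.descFactorial b * q.2.descFactorial c) : ℕ) *
              (y ^ (q.1 - b) * z ^ (q.2 - c)) := by
      rw [mul_sum]
      refine sum_congr rfl fun q _ ↦ ?_
      push_cast
      ring
    _ = _ := by
      rw [sum_antidiagonal_choose_mul_descFactorial_mul_pow]
      push_cast
      ring

theorem sum_antidiagonal_trinomial_mul_descFactorial (n a b c : ℕ) :
    ∑ p ∈ antidiagonal n, ∑ q ∈ antidiagonal p.2, n.choose p.1 * p.2.choose q.1 *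
        (p.1.descFactorial a * q.1.descFactorial b * q.2.descFactorial c) =
      n.descFactorial (a + b + c) * 3 ^ (n - (a + b + c)) := by
  simpa only [Nat.cast_id, one_pow, mul_one] using
    sum_antidiagonal_trinomial_mul_descFactorial_mul_pow n a b c (1 : ℕ) 1 1

theorem sum_antidiagonal_trinomial_mul_snd_snd (n : ℕ) :
    ∑ p ∈ antidiagonal n, ∑ q ∈ antidiagonal p.2, n.choose p.1 * p.2.choose q.1 * q.2 =
      n * 3 ^ (n - 1) := by
  simpa using sum_antidiagonal_trinomial_mul_descFactorial n 0 0 1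

theorem sum_antidiagonal_trinomial_mul_fst_mul_snd_fst (n : ℕ) :
    ∑ p ∈ antidiagonal n, ∑ q ∈ antidiagonal p.2, n.choose p.1 * p.2.choose q.1 * (p.1 * q.1) =
      n.descFactorial 2 * 3 ^ (n - 2) := by
  simpa using sum_antidiagonal_trinomial_mul_descFactorial n 1 1 0

end

/-- For every natural number n ≥ 2,
`∑_{(k1,k2)} (n choose k1) · ((n − k1) choose k2) · [(n − k1 − k2) · (n−1)! + k1 · k2 · (n−2)!]
  = 4 · n! · 3^{n−2}`,
where the sum ranges over all pairs (k1, k2) of natural numbers with k1 + k2 ≤ n and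
(k1, k2) ∉ {(0, n), (n, 0)}. -/
theorem stmt_18 (n : ℕ) (hn : 2 ≤ n) :
    ∑ p ∈ (Finset.range (n + 1) ×ˢ Finset.range (n + 1)).filter
        (fun p => p.1 + p.2 ≤ n ∧ p ≠ (0, n) ∧ p ≠ (n, 0)),
      n.choose p.1 * (n - p.1).choose p.2 *
        ((n - p.1 - p.2) * (n - 1).factorial + p.1 * p.2 * (n - 2).factorial)
      = 4 * n.factorial * 3 ^ (n - 2) := by
  have excluded_terms_vanish : ∀ p : ℕ × ℕ, p = (0, n) ∨ p = (n, 0) →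
      n.choose p.1 * (n - p.1).choose p.2 *
        ((n - p.1 - p.2) * (n - 1).factorial + p.1 * p.2 * (n - 2).factorial) = 0 := by
    rintro p (rfl | rfl) <;> simp
  have factorial_pred : n * (n - 1).factorial = n.factorial := Nat.mul_factorial_pred (by lia)
  have factorial_pred_pred : (n - 2).factorial * n.descFactorial 2 = n.factorial :=
    Nat.factorial_mul_descFactorial hn
  have pow_pred : 3 ^ (n - 1) = 3 * 3 ^ (n - 2) := by
    rw [← pow_succ', show n - 2 + 1 = n - 1 by lia]
  rw [Finset.sum_subset (Finset.monotone_filter_right _ fun _ _ hp ↦ hp.1) fun p hp hp' ↦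
      excluded_terms_vanish p (by grind),
    sum_range_product_filter_add_le n fun p q ↦ n.choose p.1 * p.2.choose q.1 *
      (q.2 * (n - 1).factorial + p.1 * q.1 * (n - 2).factorial)]
  calc
    _ = n * 3 ^ (n - 1) * (n - 1).factorial +
          n.descFactorial 2 * 3 ^ (n - 2) * (n - 2).factorial := by
      simp only [mul_add, ← mul_assoc _ _ (Nat.factorial _), Finset.sum_add_distrib,
        ← Finset.sum_mul, sum_antidiagonal_trinomial_mul_snd_snd,
        sum_antidiagonal_trinomial_mul_fst_mul_snd_fst]
    _ = 3 * (n * (n - 1).factorial) * 3 ^ (n - 2) +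
          (n - 2).factorial * n.descFactorial 2 * 3 ^ (n - 2) := by rw [pow_pred]; ring
    _ = 4 * n.factorial * 3 ^ (n - 2) := by rw [factorial_pred, factorial_pred_pred]; ring
end
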